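/- arXiv:1508.00232 — 2 statements merged into one kernel-verified Lean document; each statement's English description precedes it below -/
import Mathlib

section
/- Call a pair (γ,δ) ∈ [N]×[T] admissible if (α,β,γ,δ) ∈ 𝔛 for some α ∈ [N], β ∈ [M]. Suppose matrices R_χ ∈ ℝ^{n×n} (symmetric, for χ ∈ 𝔛), G_{γ,δ} ∈ ℝ^{n×n}, and F_{γ,δ} ∈ ℝ^{m×n} (for (γ,δ) ∈ [N]×[T]) satisfy, for every χ = (α,β,γ,δ) ∈ 𝔛, the positive definiteness of the symmetric block matrix [[R_χ, A_α G_{γ,δ} + B_α F_{γ,δ}],[(A_α G_{γ,δ} + B_α F_{γ,δ})ᵀ, G_{γ,δ} + G_{γ,δ}ᵀ − D̄_χ(R)]]. Then G_{γ,δ} is invertible for every admissible (γ,δ), and if the feedback gains satisfy K_{γ,δ} = F_{γ,δ} G_{γ,δ}⁻¹ for every admissible (γ,δ) (arbitrary otherwise), then the closed-loop system Σ_K is mean square stable. -/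
open MeasureTheory ProbabilityTheory Matrix

noncomputable section

/-- The state space `[N] × [M] × [N] × [T]` of the extended process `r̄`.
`Fin N`, `Fin M`, `Fin T` play the roles of `[N] = {1,…,N}`, `[M]`, `[T]`
(with `Fin T` being the 0-indexed version of `[T] = {1,…,T}`, i.e. `δ ∈ [T]`
corresponds to `δ - 1 : Fin T`). -/
abbrev XT (NN MM T : ℕ) : Type := Fin NN × Fin MM × Fin NN × Fin T

/-- `X` is a time-homogeneous Markov chain with transition probability matrix `P`:
for every `k`, every state `j` and every sequence of states `i`,
`Pr(X(k+1) = j ∧ X(l) = i l for all l ≤ k) = P (i k) j * Pr(X(l) = i l for all l ≤ k)`. -/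
def IsMarkovChain {Ω : Type} {_mΩ : MeasurableSpace Ω} (μ : Measure Ω) {S : Type}
    (X : ℕ → Ω → S) (P : S → S → ℝ) : Prop :=
  ∀ (k : ℕ) (j : S) (i : ℕ → S),
    (μ {ω | X (k + 1) ω = j ∧ ∀ l ≤ k, X l ω = i l}).toReal
      = P (i k) j * (μ {ω | ∀ l ≤ k, X l ω = i l}).toReal

/-- `⌊m⌋_T`, the unique element of `{0,…,T-1}` congruent to `m` modulo `T`, as `Fin T`. -/
def intToFin (T : ℕ) [NeZero T] (a : ℤ) : Fin T :=
  ⟨(a % (T : ℤ)).toNat, by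
    have hT : 0 < (T : ℤ) := by
      exact_mod_cast Nat.pos_of_ne_zero (NeZero.ne T)
    have h1 : 0 ≤ a % (T : ℤ) := Int.emod_nonneg a (by omega)
    have h2 : a % (T : ℤ) < (T : ℤ) := Int.emod_lt_of_pos a hT
    omega⟩

-- `τ(k)`: the most recent observation time `≤ k` (i.e. the largest `j ≤ k` with
-- `f(s(j)) = 1`), or `τ₀` if no observation has occurred up to time `k` (`k < t₀`).
open Classical in
def tauZ {Ω : Type} {MM : ℕ} (s : ℕ → Ω → Fin MM) (f : Fin MM → Bool)
    (τ₀ : ℤ) (k : ℕ) (ω : Ω) : ℤ :=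
  if ∃ j ≤ k, f (s j ω) = true
  then ((Nat.findGreatest (fun j => f (s j ω) = true) k : ℕ) : ℤ)
  else τ₀

-- `σ(k) = r(τ(k))` if an observation occurred by time `k` (i.e. `k ≥ t₀`), else `σ₀`.
open Classical in
def sigmaProc {Ω : Type} {NN MM : ℕ} (r : ℕ → Ω → Fin NN) (s : ℕ → Ω → Fin MM)
    (f : Fin MM → Bool) (σ₀ : Fin NN) (k : ℕ) (ω : Ω) : Fin NN :=
  if ∃ j ≤ k, f (s j ω) = true
  then r (Nat.findGreatest (fun j => f (s j ω) = true) k) ω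
  else σ₀

/-- `ρ(k) = ⌊k - τ(k)⌋_T + 1 ∈ [T]`, represented 0-indexed as `⌊k - τ(k)⌋_T : Fin T`. -/
def rhoProc {Ω : Type} {MM T : ℕ} [NeZero T] (s : ℕ → Ω → Fin MM) (f : Fin MM → Bool)
    (τ₀ : ℤ) (k : ℕ) (ω : Ω) : Fin T :=
  intToFin T ((k : ℤ) - tauZ s f τ₀ k ω)

/-- The extended process `r̄(k) = (r(k), s(k), σ(k), ρ(k))`. -/
def rbarProc {Ω : Type} {NN MM T : ℕ} [NeZero T] (r : ℕ → Ω → Fin NN)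
    (s : ℕ → Ω → Fin MM) (f : Fin MM → Bool) (τ₀ : ℤ) (σ₀ : Fin NN)
    (k : ℕ) (ω : Ω) : XT NN MM T :=
  (r k ω, s k ω, sigmaProc r s f σ₀ k ω, rhoProc s f τ₀ k ω)

/-- Membership in `𝔛`: if `f(β) = 1` then `α = γ` and `δ = 1` (0-indexed: `δ = 0`). -/
def inX {NN MM T : ℕ} [NeZero T] (f : Fin MM → Bool) (χ : XT NN MM T) : Prop :=
  f χ.2.1 = true → χ.1 = χ.2.2.1 ∧ χ.2.2.2 = 0

/-- The transition probabilities `p̄_{χχ'}` of the extended chain. The condition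
`⌊δ' - δ - 1⌋_T = 0` for `δ, δ' ∈ [T]` is, in 0-indexed form, `δ' = δ + 1` in `Fin T`. -/
def pbar {NN MM T : ℕ} [NeZero T] (P : Matrix (Fin NN) (Fin NN) ℝ)
    (Q : Matrix (Fin MM) (Fin MM) ℝ) (f : Fin MM → Bool) (χ χ' : XT NN MM T) : ℝ :=
  (if f χ'.2.1 = true
    then (if χ'.1 = χ'.2.2.1 ∧ χ'.2.2.2 = 0 then (1 : ℝ) else 0)
    else (if χ'.2.2.1 = χ.2.2.1 ∧ χ'.2.2.2 = χ.2.2.2 + 1 then (1 : ℝ) else 0))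
  * P χ.1 χ'.1 * Q χ.2.1 χ'.2.1

/-- The state trajectory of the closed-loop system
`x(k+1) = A(mode(k)) x(k) + E(mode(k)) w(k)`, `x(0) = x₀`. -/
def traj {Ω S : Type} {n q : ℕ}
    (Amat : S → Matrix (Fin n) (Fin n) ℝ) (Emat : S → Matrix (Fin n) (Fin q) ℝ)
    (mode : ℕ → Ω → S) (w : ℕ → Ω → Fin q → ℝ) (x0 : Fin n → ℝ) : ℕ → Ω → Fin n → ℝ
  | 0, _ => x0
  | (k + 1), ω =>
      (Amat (mode k ω)).mulVec (traj Amat Emat mode w x0 k ω)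
        + (Emat (mode k ω)).mulVec (w k ω)

/-- `A_{K,χ} = A_α + B_α K_{γ,δ}`. -/
def AKmat {NN MM T n m : ℕ} (A : Fin NN → Matrix (Fin n) (Fin n) ℝ)
    (B : Fin NN → Matrix (Fin n) (Fin m) ℝ)
    (K : Fin NN → Fin T → Matrix (Fin m) (Fin n) ℝ) (χ : XT NN MM T) :
    Matrix (Fin n) (Fin n) ℝ :=
  A χ.1 + B χ.1 * K χ.2.2.1 χ.2.2.2

/-- `C_{K,χ} = C_α + D_α K_{γ,δ}`. -/
def CKmat {NN MM T n m ℓ : ℕ} (C : Fin NN → Matrix (Fin ℓ) (Fin n) ℝ)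
    (D : Fin NN → Matrix (Fin ℓ) (Fin m) ℝ)
    (K : Fin NN → Fin T → Matrix (Fin m) (Fin n) ℝ) (χ : XT NN MM T) :
    Matrix (Fin ℓ) (Fin n) ℝ :=
  C χ.1 + D χ.1 * K χ.2.2.1 χ.2.2.2

/-- Squared Euclidean norm of a vector, as an extended nonnegative real. -/
def sqE {d : ℕ} (v : Fin d → ℝ) : ENNReal := ENNReal.ofReal (∑ i, (v i) ^ 2)

-- The operator `D̄_χ(R) = ∑_{χ' ∈ 𝔛} p̄_{χ'χ} R_{χ'}`.
open Classical in
def Dop {NN MM T n : ℕ} [NeZero T] (P : Matrix (Fin NN) (Fin NN) ℝ)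
    (Q : Matrix (Fin MM) (Fin MM) ℝ) (f : Fin MM → Bool)
    (R : XT NN MM T → Matrix (Fin n) (Fin n) ℝ) (χ : XT NN MM T) :
    Matrix (Fin n) (Fin n) ℝ :=
  ∑ χ' : XT NN MM T, if inX f χ' then pbar P Q f χ' χ • R χ' else 0

-- The operator `F̄_χ(Z) = ∑_{χ' ∈ 𝔛} p̄_{χχ'} Z_{χ,χ'}`.
open Classical in
def Fop {NN MM T n : ℕ} [NeZero T] (P : Matrix (Fin NN) (Fin NN) ℝ)
    (Q : Matrix (Fin MM) (Fin MM) ℝ) (f : Fin MM → Bool)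
    (Z : XT NN MM T → XT NN MM T → Matrix (Fin n) (Fin n) ℝ) (χ : XT NN MM T) :
    Matrix (Fin n) (Fin n) ℝ :=
  ∑ χ' : XT NN MM T, if inX f χ' then pbar P Q f χ χ' • Z χ χ' else 0

/-- A pair `(γ,δ) ∈ [N] × [T]` is admissible if `(α,β,γ,δ) ∈ 𝔛` for some `α, β`. -/
def Admissible {NN MM T : ℕ} [NeZero T] (f : Fin MM → Bool) (g : Fin NN) (d : Fin T) : Prop :=
  ∃ (α : Fin NN) (β : Fin MM), inX (T := T) f (α, β, g, d)

/-- A realization, on some probability space, of the pair of independent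
time-homogeneous Markov chains `(r, s)` with transition matrices `P` and `Q`. -/
structure MJLSReal (NN MM : ℕ) (P : Matrix (Fin NN) (Fin NN) ℝ)
    (Q : Matrix (Fin MM) (Fin MM) ℝ) : Type 1 where
  Ω : Type
  inst : MeasurableSpace Ω
  μ : @Measure Ω inst
  prob : IsProbabilityMeasure μ
  r : ℕ → Ω → Fin NN
  s : ℕ → Ω → Fin MM
  meas_r : ∀ k, Measurable[inst] (r k)
  meas_s : ∀ k, Measurable[inst] (s k)
  markov_r : IsMarkovChain μ r fun i j => P i j
  markov_s : IsMarkovChain μ s fun i j => Q i j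
  indep : IndepFun (fun ω l => r l ω) (fun ω l => s l ω) μ

/-- A realization, on some probability space, of a time-homogeneous Markov chain `θ`
taking values in `𝔛` with transition probabilities `p̄`. -/
structure ThetaReal (NN MM T : ℕ) [NeZero T] (P : Matrix (Fin NN) (Fin NN) ℝ)
    (Q : Matrix (Fin MM) (Fin MM) ℝ) (f : Fin MM → Bool) : Type 1 where
  Ω : Type
  inst : MeasurableSpace Ω
  μ : @Measure Ω inst
  prob : IsProbabilityMeasure μ
  θ : ℕ → Ω → XT NN MM T
  meas : ∀ k, Measurable[inst] (θ k)
  mem : ∀ k ω, inX f (θ k ω)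
  markov : IsMarkovChain μ θ (pbar P Q f)

/-- Mean square stability of the closed-loop system `Σ_K`: there are `c > 0` and
`λ ∈ [0,1)` such that for every realization, every deterministic initialization
(`r(0) = r₀`, `s(0) = s₀` a.s., together with `σ₀` and `τ₀ ≤ 0`, so that `r̄(0)`
is a deterministic element of `𝔛`), every `x₀` and every `k`,
`E[‖x(k)‖²] ≤ c λ^k ‖x₀‖²` (with `w ≡ 0`). -/
def MeanSquareStable {NN MM T n m q : ℕ} [NeZero T]
    (P : Matrix (Fin NN) (Fin NN) ℝ) (Qm : Matrix (Fin MM) (Fin MM) ℝ) (f : Fin MM → Bool)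
    (A : Fin NN → Matrix (Fin n) (Fin n) ℝ) (B : Fin NN → Matrix (Fin n) (Fin m) ℝ)
    (E : Fin NN → Matrix (Fin n) (Fin q) ℝ)
    (K : Fin NN → Fin T → Matrix (Fin m) (Fin n) ℝ) : Prop :=
  ∃ c : ℝ, 0 < c ∧ ∃ lam : ℝ, 0 ≤ lam ∧ lam < 1 ∧
    ∀ (S : MJLSReal NN MM P Qm) (τ₀ : ℤ), τ₀ ≤ 0 →
      ∀ (σ₀ r₀ : Fin NN) (s₀ : Fin MM),
        (∀ᵐ ω ∂S.μ, S.r 0 ω = r₀ ∧ S.s 0 ω = s₀) →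
        ∀ (x0 : Fin n → ℝ) (k : ℕ),
          (∫⁻ ω, sqE (traj (AKmat A B K) (fun χ => E χ.1)
              (rbarProc S.r S.s f τ₀ σ₀) (fun _ _ => 0) x0 k ω) ∂S.μ)
            ≤ ENNReal.ofReal (c * lam ^ k * ∑ i, (x0 i) ^ 2)

/-- Mean square stability of `Σ̄_K` (the system driven by the chain `θ`). -/
def MeanSquareStableBar {NN MM T n m q : ℕ} [NeZero T]
    (P : Matrix (Fin NN) (Fin NN) ℝ) (Qm : Matrix (Fin MM) (Fin MM) ℝ) (f : Fin MM → Bool)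
    (A : Fin NN → Matrix (Fin n) (Fin n) ℝ) (B : Fin NN → Matrix (Fin n) (Fin m) ℝ)
    (E : Fin NN → Matrix (Fin n) (Fin q) ℝ)
    (K : Fin NN → Fin T → Matrix (Fin m) (Fin n) ℝ) : Prop :=
  ∃ c : ℝ, 0 < c ∧ ∃ lam : ℝ, 0 ≤ lam ∧ lam < 1 ∧
    ∀ (S : ThetaReal NN MM T P Qm f) (χ : XT NN MM T), inX f χ →
      (∀ᵐ ω ∂S.μ, S.θ 0 ω = χ) →
      ∀ (x0 : Fin n → ℝ) (k : ℕ),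
        (∫⁻ ω, sqE (traj (AKmat A B K) (fun χ' => E χ'.1) S.θ (fun _ _ => 0) x0 k ω) ∂S.μ)
          ≤ ENNReal.ofReal (c * lam ^ k * ∑ i, (x0 i) ^ 2)

/-- The impulse disturbance `w = e_i φ`, i.e. `w(0) = e_i` and `w(k) = 0` for `k ≥ 1`. -/
def impulse {Ω : Type} (q : ℕ) (i : Fin q) : ℕ → Ω → Fin q → ℝ :=
  fun k _ j => if k = 0 ∧ j = i then 1 else 0

/-- `∑_k E[‖z(k; 0, χ, e_i φ)‖²]` for `Σ_K` on a given realization with data `(τ₀, σ₀)`. -/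
def H2TermSigma {NN MM T n m q ℓ : ℕ} [NeZero T]
    {P : Matrix (Fin NN) (Fin NN) ℝ} {Qm : Matrix (Fin MM) (Fin MM) ℝ}
    (S : MJLSReal NN MM P Qm) (f : Fin MM → Bool) (τ₀ : ℤ) (σ₀ : Fin NN)
    (A : Fin NN → Matrix (Fin n) (Fin n) ℝ) (B : Fin NN → Matrix (Fin n) (Fin m) ℝ)
    (C : Fin NN → Matrix (Fin ℓ) (Fin n) ℝ) (D : Fin NN → Matrix (Fin ℓ) (Fin m) ℝ)
    (E : Fin NN → Matrix (Fin n) (Fin q) ℝ)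
    (K : Fin NN → Fin T → Matrix (Fin m) (Fin n) ℝ) (i : Fin q) : ENNReal :=
  ∑' k : ℕ, ∫⁻ ω, sqE ((CKmat C D K (rbarProc S.r S.s f τ₀ σ₀ k ω)).mulVec
      (traj (AKmat A B K) (fun χ => E χ.1) (rbarProc S.r S.s f τ₀ σ₀)
        (impulse q i) 0 k ω)) ∂S.μ

-- `‖Σ_K‖₂² < γ`, where `‖Σ_K‖₂² = ∑_{i=1}^q ∑_{χ ∈ 𝔛} μ̄(χ) ‖z(⬝;0,χ,e_iφ)‖₂²` and the
-- expectations are over arbitrary realizations with deterministic initialization `r̄(0) = χ`.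
open Classical in
def H2SqLtSigma {NN MM T n m q ℓ : ℕ} [NeZero T]
    (P : Matrix (Fin NN) (Fin NN) ℝ) (Qm : Matrix (Fin MM) (Fin MM) ℝ) (f : Fin MM → Bool)
    (A : Fin NN → Matrix (Fin n) (Fin n) ℝ) (B : Fin NN → Matrix (Fin n) (Fin m) ℝ)
    (C : Fin NN → Matrix (Fin ℓ) (Fin n) ℝ) (D : Fin NN → Matrix (Fin ℓ) (Fin m) ℝ)
    (E : Fin NN → Matrix (Fin n) (Fin q) ℝ)
    (K : Fin NN → Fin T → Matrix (Fin m) (Fin n) ℝ)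
    (μbar : XT NN MM T → ℝ) (γ : ℝ) : Prop :=
  ∀ (S : Fin q → XT NN MM T → MJLSReal NN MM P Qm)
    (τ : Fin q → XT NN MM T → ℤ) (σv : Fin q → XT NN MM T → Fin NN),
    (∀ i χ, inX f χ → τ i χ ≤ 0 ∧
        (∀ᵐ ω ∂(S i χ).μ, rbarProc (S i χ).r (S i χ).s f (τ i χ) (σv i χ) 0 ω = χ)) →
    (∑ i : Fin q, ∑ χ : XT NN MM T,
        if inX f χ
        then ENNReal.ofReal (μbar χ) * H2TermSigma (S i χ) f (τ i χ) (σv i χ) A B C D E K i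
        else 0)
      < ENNReal.ofReal γ

/-- `∑_k E[‖z̄(k; 0, χ, e_i φ)‖²]` for `Σ̄_K` on a given realization of `θ`. -/
def H2TermBar {NN MM T n m q ℓ : ℕ} [NeZero T]
    {P : Matrix (Fin NN) (Fin NN) ℝ} {Qm : Matrix (Fin MM) (Fin MM) ℝ} {f : Fin MM → Bool}
    (S : ThetaReal NN MM T P Qm f)
    (A : Fin NN → Matrix (Fin n) (Fin n) ℝ) (B : Fin NN → Matrix (Fin n) (Fin m) ℝ)
    (C : Fin NN → Matrix (Fin ℓ) (Fin n) ℝ) (D : Fin NN → Matrix (Fin ℓ) (Fin m) ℝ)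
    (E : Fin NN → Matrix (Fin n) (Fin q) ℝ)
    (K : Fin NN → Fin T → Matrix (Fin m) (Fin n) ℝ) (i : Fin q) : ENNReal :=
  ∑' k : ℕ, ∫⁻ ω, sqE ((CKmat C D K (S.θ k ω)).mulVec
      (traj (AKmat A B K) (fun χ => E χ.1) S.θ (impulse q i) 0 k ω)) ∂S.μ

-- `‖Σ̄_K‖₂² < γ` (the `H₂` norm of `Σ̄_K`, defined with `θ` in place of `r̄`).
open Classical in
def H2SqLtBar {NN MM T n m q ℓ : ℕ} [NeZero T]
    (P : Matrix (Fin NN) (Fin NN) ℝ) (Qm : Matrix (Fin MM) (Fin MM) ℝ) (f : Fin MM → Bool)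
    (A : Fin NN → Matrix (Fin n) (Fin n) ℝ) (B : Fin NN → Matrix (Fin n) (Fin m) ℝ)
    (C : Fin NN → Matrix (Fin ℓ) (Fin n) ℝ) (D : Fin NN → Matrix (Fin ℓ) (Fin m) ℝ)
    (E : Fin NN → Matrix (Fin n) (Fin q) ℝ)
    (K : Fin NN → Fin T → Matrix (Fin m) (Fin n) ℝ)
    (μbar : XT NN MM T → ℝ) (γ : ℝ) : Prop :=
  ∀ (S : Fin q → XT NN MM T → ThetaReal NN MM T P Qm f),
    (∀ i χ, inX f χ → (∀ᵐ ω ∂(S i χ).μ, (S i χ).θ 0 ω = χ)) →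
    (∑ i : Fin q, ∑ χ : XT NN MM T,
        if inX f χ
        then ENNReal.ofReal (μbar χ) * H2TermBar (S i χ) A B C D E K i
        else 0)
      < ENNReal.ofReal γ

/-- The σ-algebra `Θ_k` generated by `r(0), s(0), …, r(k), s(k)`, for a realization. -/
def sigFiltSigma {NN MM : ℕ} {P : Matrix (Fin NN) (Fin NN) ℝ}
    {Q : Matrix (Fin MM) (Fin MM) ℝ} (S : MJLSReal NN MM P Q) (k : ℕ) :
    MeasurableSpace S.Ω :=
  ⨆ j ∈ Finset.range (k + 1),
    (MeasurableSpace.comap (S.r j) inferInstance ⊔ MeasurableSpace.comap (S.s j) inferInstance)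

/-- The σ-algebra generated by `θ(0), …, θ(k)`, for a realization of `θ`. -/
def sigFiltBar {NN MM T : ℕ} [NeZero T] {P : Matrix (Fin NN) (Fin NN) ℝ}
    {Q : Matrix (Fin MM) (Fin MM) ℝ} {f : Fin MM → Bool} (S : ThetaReal NN MM T P Q f)
    (k : ℕ) : MeasurableSpace S.Ω :=
  ⨆ j ∈ Finset.range (k + 1), MeasurableSpace.comap (S.θ j) inferInstance

/-- `Σ_K` satisfies `‖Σ_K‖∞² < γ`: there is `0 ≤ c < γ` such that `‖z‖₂² ≤ c ‖w‖₂²`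
for every realization, every deterministic initialization `r̄(0) = r̄₀ ∈ 𝔛`, and
every nonzero `w ∈ ℓ²(ℝ^q)` adapted to `(Θ_k)_k` (with `x₀ = 0`). -/
def HinfSqLtSigma {NN MM T n m q ℓ : ℕ} [NeZero T]
    (P : Matrix (Fin NN) (Fin NN) ℝ) (Qm : Matrix (Fin MM) (Fin MM) ℝ) (f : Fin MM → Bool)
    (A : Fin NN → Matrix (Fin n) (Fin n) ℝ) (B : Fin NN → Matrix (Fin n) (Fin m) ℝ)
    (C : Fin NN → Matrix (Fin ℓ) (Fin n) ℝ) (D : Fin NN → Matrix (Fin ℓ) (Fin m) ℝ)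
    (E : Fin NN → Matrix (Fin n) (Fin q) ℝ)
    (K : Fin NN → Fin T → Matrix (Fin m) (Fin n) ℝ) (γ : ℝ) : Prop :=
  ∃ c : ℝ, 0 ≤ c ∧ c < γ ∧
    ∀ (S : MJLSReal NN MM P Qm) (τ₀ : ℤ), τ₀ ≤ 0 → ∀ (σ₀ : Fin NN) (χ : XT NN MM T),
      inX f χ → (∀ᵐ ω ∂S.μ, rbarProc S.r S.s f τ₀ σ₀ 0 ω = χ) →
      ∀ (w : ℕ → S.Ω → Fin q → ℝ),
        (∀ k, Measurable[sigFiltSigma S k] (w k)) →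
        0 < (∑' k : ℕ, ∫⁻ ω, sqE (w k ω) ∂S.μ) →
        (∑' k : ℕ, ∫⁻ ω, sqE (w k ω) ∂S.μ) ≠ ⊤ →
        (∑' k : ℕ, ∫⁻ ω, sqE ((CKmat C D K (rbarProc S.r S.s f τ₀ σ₀ k ω)).mulVec
            (traj (AKmat A B K) (fun χ' => E χ'.1) (rbarProc S.r S.s f τ₀ σ₀) w 0 k ω)) ∂S.μ)
          ≤ ENNReal.ofReal c * (∑' k : ℕ, ∫⁻ ω, sqE (w k ω) ∂S.μ)

/-- `Σ̄_K` satisfies `‖Σ̄_K‖∞² < γ` (disturbances adapted to the filtration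
generated by `θ`). -/
def HinfSqLtBar {NN MM T n m q ℓ : ℕ} [NeZero T]
    (P : Matrix (Fin NN) (Fin NN) ℝ) (Qm : Matrix (Fin MM) (Fin MM) ℝ) (f : Fin MM → Bool)
    (A : Fin NN → Matrix (Fin n) (Fin n) ℝ) (B : Fin NN → Matrix (Fin n) (Fin m) ℝ)
    (C : Fin NN → Matrix (Fin ℓ) (Fin n) ℝ) (D : Fin NN → Matrix (Fin ℓ) (Fin m) ℝ)
    (E : Fin NN → Matrix (Fin n) (Fin q) ℝ)
    (K : Fin NN → Fin T → Matrix (Fin m) (Fin n) ℝ) (γ : ℝ) : Prop :=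
  ∃ c : ℝ, 0 ≤ c ∧ c < γ ∧
    ∀ (S : ThetaReal NN MM T P Qm f) (χ : XT NN MM T),
      inX f χ → (∀ᵐ ω ∂S.μ, S.θ 0 ω = χ) →
      ∀ (w : ℕ → S.Ω → Fin q → ℝ),
        (∀ k, Measurable[sigFiltBar S k] (w k)) →
        0 < (∑' k : ℕ, ∫⁻ ω, sqE (w k ω) ∂S.μ) →
        (∑' k : ℕ, ∫⁻ ω, sqE (w k ω) ∂S.μ) ≠ ⊤ →
        (∑' k : ℕ, ∫⁻ ω, sqE ((CKmat C D K (S.θ k ω)).mulVec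
            (traj (AKmat A B K) (fun χ' => E χ'.1) S.θ w 0 k ω)) ∂S.μ)
          ≤ ENNReal.ofReal c * (∑' k : ℕ, ∫⁻ ω, sqE (w k ω) ∂S.μ)

/-- The symmetric 4×4 block matrix appearing in the `H∞` LMI, with diagonal blocks
`D1, γ I_q, D3, I_ℓ`, sub-diagonal blocks `(3,1) = B31`, `(3,2) = B32`, `(4,1) = B41`,
the corresponding transposed blocks above the diagonal, and zeros elsewhere. -/
def hinfBlock {n q ℓ : ℕ} (γ : ℝ) (D1 D3 : Matrix (Fin n) (Fin n) ℝ)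
    (B31 : Matrix (Fin n) (Fin n) ℝ) (B32 : Matrix (Fin n) (Fin q) ℝ)
    (B41 : Matrix (Fin ℓ) (Fin n) ℝ) :
    Matrix ((Fin n ⊕ Fin q) ⊕ (Fin n ⊕ Fin ℓ)) ((Fin n ⊕ Fin q) ⊕ (Fin n ⊕ Fin ℓ)) ℝ :=
  Matrix.fromBlocks
    (Matrix.fromBlocks D1 0 0 (γ • (1 : Matrix (Fin q) (Fin q) ℝ)))
    (Matrix.fromBlocks B31ᵀ B41ᵀ B32ᵀ 0)
    (Matrix.fromBlocks B31 B32 B41 0)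
    (Matrix.fromBlocks D3 0 0 (1 : Matrix (Fin ℓ) (Fin ℓ) ℝ))

section Helpers

/-- Positive definite quadratic forms dominate continuous 2-homogeneous functions. -/
theorem aux_dominate {n : ℕ} (q p : (Fin n → ℝ) → ℝ) (hq : Continuous q) (hp : Continuous p)
    (hq2 : ∀ (t : ℝ) u, q (t • u) = t ^ 2 * q u) (hp2 : ∀ (t : ℝ) u, p (t • u) = t ^ 2 * p u)
    (hpos : ∀ u, u ≠ 0 → 0 < p u) :
    ∃ C : ℝ, 0 ≤ C ∧ ∀ u, q u ≤ C * p u := by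
  have hc : IsCompact (Metric.sphere (0 : Fin n → ℝ) 1) := isCompact_sphere _ _
  have hcont : ContinuousOn (fun u => q u / p u) (Metric.sphere (0 : Fin n → ℝ) 1) := by
    apply ContinuousOn.div hq.continuousOn hp.continuousOn
    intro u hu
    apply (hpos u _).ne'
    rintro rfl
    simp at hu
  obtain ⟨C, hC⟩ := hc.exists_bound_of_continuousOn hcont
  refine ⟨max C 0, le_max_right _ _, fun u => ?_⟩
  by_cases hu : u = 0
  · subst hu
    have h1 := hq2 0 0
    have h2 := hp2 0 0
    simp at h1 h2
    rw [h1, h2]; simp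
  · have hn : 0 < ‖u‖ := norm_pos_iff.mpr hu
    have hmem : (‖u‖⁻¹ • u) ∈ Metric.sphere (0 : Fin n → ℝ) 1 := by
      simp [norm_smul, hn.ne']
    have h := hC _ hmem
    rw [hq2, hp2, mul_div_mul_left _ _ (by positivity)] at h
    have h3 : q u / p u ≤ max C 0 := (le_abs_self _).trans (h.trans (le_max_left _ _))
    rwa [div_le_iff₀ (hpos u hu)] at h3

theorem aux_quad_cont {n : ℕ} (M : Matrix (Fin n) (Fin n) ℝ) :
    Continuous fun u : Fin n → ℝ => u ⬝ᵥ (M *ᵥ u) := by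
  fun_prop

theorem aux_quad_smul {n : ℕ} (M : Matrix (Fin n) (Fin n) ℝ) (t : ℝ) (u : Fin n → ℝ) :
    (t • u) ⬝ᵥ (M *ᵥ (t • u)) = t ^ 2 * (u ⬝ᵥ (M *ᵥ u)) := by
  simp [mulVec_smul]; ring

theorem aux_transpose {n k : ℕ} (M : Matrix (Fin n) (Fin k) ℝ) (u : Fin n → ℝ) (v : Fin k → ℝ) :
    v ⬝ᵥ (Mᵀ *ᵥ u) = u ⬝ᵥ (M *ᵥ v) := by
  rw [mulVec_transpose, dotProduct_comm, dotProduct_mulVec]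

/-- The block LMI tested on the vector `(u, v)`. -/
theorem aux_block {n : ℕ} (R W Z : Matrix (Fin n) (Fin n) ℝ)
    (h : (Matrix.fromBlocks R W Wᵀ Z).PosDef) (u v : Fin n → ℝ) (huv : u ≠ 0 ∨ v ≠ 0) :
    0 < u ⬝ᵥ (R *ᵥ u) + 2 * (u ⬝ᵥ (W *ᵥ v)) + v ⬝ᵥ (Z *ᵥ v) := by
  have hne : Sum.elim u v ≠ 0 := by
    intro h0
    have h1 : u = 0 := by ext i; exact congrFun h0 (Sum.inl i)
    have h2 : v = 0 := by ext i; exact congrFun h0 (Sum.inr i)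
    tauto
  have := h.dotProduct_mulVec_pos hne
  rw [fromBlocks_mulVec] at this
  simp only [star_trivial, sumElim_dotProduct_sumElim, Sum.elim_comp_inl, Sum.elim_comp_inr,
    dotProduct_add] at this
  rw [aux_transpose] at this
  linarith

theorem aux_isUnit {n : ℕ} (G S : Matrix (Fin n) (Fin n) ℝ)
    (hS : ∀ u, 0 ≤ u ⬝ᵥ (S *ᵥ u))
    (h : ∀ v, v ≠ 0 → 0 < v ⬝ᵥ ((G + Gᵀ - S) *ᵥ v)) : IsUnit G := by
  rw [← Matrix.mulVec_injective_iff_isUnit]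
  intro x y hxy
  have hxy' : G *ᵥ (x - y) = 0 := by
    have hxy2 : G *ᵥ x = G *ᵥ y := hxy
    rw [mulVec_sub, hxy2, sub_self]
  by_contra hne
  have h1 := h (x - y) (sub_ne_zero.mpr hne)
  have h2 := hS (x - y)
  rw [sub_mulVec, add_mulVec, dotProduct_sub, dotProduct_add, aux_transpose, hxy',
    dotProduct_zero] at h1
  linarith

theorem aux_lyap {n : ℕ} (R AK G W S : Matrix (Fin n) (Fin n) ℝ) (hW : W = AK * G)
    (h : (Matrix.fromBlocks R W Wᵀ (G + Gᵀ - S)).PosDef) (u : Fin n → ℝ) (hu : u ≠ 0) :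
    (AKᵀ *ᵥ u) ⬝ᵥ (S *ᵥ (AKᵀ *ᵥ u)) < u ⬝ᵥ (R *ᵥ u) := by
  have := aux_block R W _ h u (-(AKᵀ *ᵥ u)) (Or.inl hu)
  set y := AKᵀ *ᵥ u with hy
  have e1 : u ⬝ᵥ (W *ᵥ (-y)) = - (y ⬝ᵥ (G *ᵥ y)) := by
    rw [hW, ← mulVec_mulVec, mulVec_neg, mulVec_neg, dotProduct_neg, dotProduct_mulVec,
      ← mulVec_transpose]
  rw [e1] at this
  simp only [sub_mulVec, add_mulVec, mulVec_neg, neg_dotProduct, dotProduct_neg, neg_neg,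
    dotProduct_sub, dotProduct_add, aux_transpose] at this
  linarith

theorem aux_Dop {NN MM T n : ℕ} [NeZero T] (P : Matrix (Fin NN) (Fin NN) ℝ)
    (Q : Matrix (Fin MM) (Fin MM) ℝ) (f : Fin MM → Bool)
    (R : XT NN MM T → Matrix (Fin n) (Fin n) ℝ) (χ : XT NN MM T) (u : Fin n → ℝ) :
    u ⬝ᵥ (Dop P Q f R χ *ᵥ u) = ∑ χ' : XT NN MM T,
      open Classical in if inX f χ' then pbar P Q f χ' χ * (u ⬝ᵥ (R χ' *ᵥ u)) else 0 := by
  classical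
  rw [Dop, sum_mulVec, dotProduct_sum]
  refine Finset.sum_congr rfl fun χ' _ => ?_
  split_ifs <;> simp [smul_mulVec]

theorem aux_pbar_nonneg {NN MM T : ℕ} [NeZero T] (P : Matrix (Fin NN) (Fin NN) ℝ)
    (Q : Matrix (Fin MM) (Fin MM) ℝ) (hP0 : ∀ i j, 0 ≤ P i j) (hQ0 : ∀ i j, 0 ≤ Q i j)
    (f : Fin MM → Bool) (χ χ' : XT NN MM T) : 0 ≤ pbar P Q f χ χ' := by
  unfold pbar
  have := hP0 χ.1 χ'.1
  have := hQ0 χ.2.1 χ'.2.1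
  split_ifs <;> simp <;> positivity
/-- History up to time `k`. -/
def auxHist {Ω : Type} {NN MM : ℕ} (r : ℕ → Ω → Fin NN) (s : ℕ → Ω → Fin MM) (k : ℕ) (ω : Ω) :
    Fin (k + 1) → Fin NN × Fin MM := fun l => (r l ω, s l ω)

/-- `g` depends only on the history up to time `k`. -/
def AuxDep {Ω : Type} {NN MM : ℕ} (r : ℕ → Ω → Fin NN) (s : ℕ → Ω → Fin MM) (k : ℕ) {β : Type}
    (g : Ω → β) : Prop :=
  ∀ ω ω', (∀ l ≤ k, r l ω = r l ω' ∧ s l ω = s l ω') → g ω = g ω'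

theorem auxDep_factor {Ω : Type} {NN MM : ℕ} {r : ℕ → Ω → Fin NN} {s : ℕ → Ω → Fin MM} {k : ℕ}
    {β : Type} [Nonempty β] {g : Ω → β} (hg : AuxDep r s k g) :
    ∃ φ : (Fin (k + 1) → Fin NN × Fin MM) → β, g = φ ∘ auxHist r s k := by
  have : Function.FactorsThrough g (auxHist r s k) := by
    intro ω ω' h
    apply hg
    intro l hl
    have := congrFun h ⟨l, by omega⟩
    simpa [auxHist] using this
  obtain ⟨φ, hφ⟩ := (Function.factorsThrough_iff g).1 this
  exact ⟨φ, hφ⟩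

section prob
variable {Ω : Type} [mΩ : MeasurableSpace Ω] {NN MM : ℕ}

theorem auxHist_meas {r : ℕ → Ω → Fin NN} {s : ℕ → Ω → Fin MM}
    (hr : ∀ k, Measurable (r k)) (hs : ∀ k, Measurable (s k)) (k : ℕ) :
    Measurable (auxHist r s k) := by
  unfold auxHist
  fun_prop

theorem auxDep_meas {r : ℕ → Ω → Fin NN} {s : ℕ → Ω → Fin MM}
    (hr : ∀ k, Measurable (r k)) (hs : ∀ k, Measurable (s k)) {k : ℕ}
    {β : Type} [MeasurableSpace β] [Nonempty β] {g : Ω → β} (hg : AuxDep r s k g) :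
    Measurable g := by
  obtain ⟨φ, rfl⟩ := auxDep_factor hg
  exact (measurable_of_finite φ).comp (auxHist_meas hr hs k)

/-- Joint Markov property. -/
theorem aux_joint {μ : Measure Ω} [IsProbabilityMeasure μ]
    {P : Matrix (Fin NN) (Fin NN) ℝ} {Q : Matrix (Fin MM) (Fin MM) ℝ}
    (hP0 : ∀ i j, 0 ≤ P i j) (hQ0 : ∀ i j, 0 ≤ Q i j)
    {r : ℕ → Ω → Fin NN} {s : ℕ → Ω → Fin MM}
    (mr : IsMarkovChain μ r fun i j => P i j) (ms : IsMarkovChain μ s fun i j => Q i j)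
    (indep : IndepFun (fun ω l => r l ω) (fun ω l => s l ω) μ)
    (k : ℕ) (j : Fin NN) (j' : Fin MM) (a : ℕ → Fin NN) (b : ℕ → Fin MM) :
    μ {ω | (r (k + 1) ω = j ∧ s (k + 1) ω = j') ∧ ∀ l ≤ k, r l ω = a l ∧ s l ω = b l}
      = ENNReal.ofReal (P (a k) j * Q (b k) j') * μ {ω | ∀ l ≤ k, r l ω = a l ∧ s l ω = b l} := by
  have m1 : ∀ (N : ℕ) (c : ℕ → Fin N), MeasurableSet {x : ℕ → Fin N | ∀ l ≤ k, x l = c l} := by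
    intro N c
    simp only [Set.ofPred_forall]
    refine MeasurableSet.iInter fun l => MeasurableSet.iInter fun _ => ?_
    exact measurableSet_eq_fun (measurable_pi_apply l) measurable_const
  have m2 : ∀ (N : ℕ) (i : Fin N) (c : ℕ → Fin N),
      MeasurableSet {x : ℕ → Fin N | x (k + 1) = i ∧ ∀ l ≤ k, x l = c l} := by
    intro N i c
    exact (measurableSet_eq_fun (measurable_pi_apply (k + 1)) measurable_const).inter (m1 N c)
  have h1 := indep.measure_inter_preimage_eq_mul _ _ (m2 NN j a) (m2 MM j' b)
  have h0 := indep.measure_inter_preimage_eq_mul _ _ (m1 NN a) (m1 MM b)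
  have er : μ {ω | r (k + 1) ω = j ∧ ∀ l ≤ k, r l ω = a l}
      = ENNReal.ofReal (P (a k) j) * μ {ω | ∀ l ≤ k, r l ω = a l} := by
    rw [← ENNReal.ofReal_toReal (measure_ne_top μ {ω | r (k + 1) ω = j ∧ ∀ l ≤ k, r l ω = a l}),
      mr k j a, ENNReal.ofReal_mul (hP0 _ _), ENNReal.ofReal_toReal (measure_ne_top _ _)]
  have es : μ {ω | s (k + 1) ω = j' ∧ ∀ l ≤ k, s l ω = b l}
      = ENNReal.ofReal (Q (b k) j') * μ {ω | ∀ l ≤ k, s l ω = b l} := by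
    rw [← ENNReal.ofReal_toReal (measure_ne_top μ {ω | s (k + 1) ω = j' ∧ ∀ l ≤ k, s l ω = b l}),
      ms k j' b, ENNReal.ofReal_mul (hQ0 _ _), ENNReal.ofReal_toReal (measure_ne_top _ _)]
  have s1 : {ω | (r (k + 1) ω = j ∧ s (k + 1) ω = j') ∧ ∀ l ≤ k, r l ω = a l ∧ s l ω = b l}
      = (fun ω l => r l ω) ⁻¹' {x : ℕ → Fin NN | x (k + 1) = j ∧ ∀ l ≤ k, x l = a l} ∩
        (fun ω l => s l ω) ⁻¹' {x : ℕ → Fin MM | x (k + 1) = j' ∧ ∀ l ≤ k, x l = b l} := by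
    ext ω
    simp only [Set.mem_ofPred_eq, Set.mem_inter_iff, Set.mem_preimage, forall_and]
    tauto
  have s0 : {ω | ∀ l ≤ k, r l ω = a l ∧ s l ω = b l}
      = (fun ω l => r l ω) ⁻¹' {x : ℕ → Fin NN | ∀ l ≤ k, x l = a l} ∩
        (fun ω l => s l ω) ⁻¹' {x : ℕ → Fin MM | ∀ l ≤ k, x l = b l} := by
    ext ω
    simp only [Set.mem_ofPred_eq, Set.mem_inter_iff, Set.mem_preimage, forall_and]
  rw [s1, s0, h1, h0]
  simp only [Set.preimage_ofPred_eq]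
  rw [er, es, ENNReal.ofReal_mul (hP0 _ _)]
  ring

/-- One-step Markov property in integrated form. -/
theorem aux_step {μ : Measure Ω} [IsProbabilityMeasure μ]
    {P : Matrix (Fin NN) (Fin NN) ℝ} {Q : Matrix (Fin MM) (Fin MM) ℝ}
    (hP0 : ∀ i j, 0 ≤ P i j) (hQ0 : ∀ i j, 0 ≤ Q i j)
    {r : ℕ → Ω → Fin NN} {s : ℕ → Ω → Fin MM}
    (hr : ∀ k, Measurable (r k)) (hs : ∀ k, Measurable (s k))
    (mr : IsMarkovChain μ r fun i j => P i j) (ms : IsMarkovChain μ s fun i j => Q i j)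
    (indep : IndepFun (fun ω l => r l ω) (fun ω l => s l ω) μ)
    (k : ℕ) (j : Fin NN) (j' : Fin MM) (g : Ω → ENNReal) (hg : AuxDep r s k g) :
    ∫⁻ ω in {ω | r (k + 1) ω = j ∧ s (k + 1) ω = j'}, g ω ∂μ
      = ∫⁻ ω, ENNReal.ofReal (P (r k ω) j * Q (s k ω) j') * g ω ∂μ := by
  obtain ⟨φ, rfl⟩ := auxDep_factor hg
  have hH := auxHist_meas hr hs k
  have hE : MeasurableSet {ω | r (k + 1) ω = j ∧ s (k + 1) ω = j'} :=
    (measurableSet_eq_fun (hr _) measurable_const).inter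
      (measurableSet_eq_fun (hs _) measurable_const)
  have L : ∫⁻ ω in {ω | r (k + 1) ω = j ∧ s (k + 1) ω = j'}, (φ ∘ auxHist r s k) ω ∂μ
      = ∫⁻ h, φ h ∂((μ.restrict {ω | r (k + 1) ω = j ∧ s (k + 1) ω = j'}).map
        (auxHist r s k)) := by
    rw [lintegral_map (measurable_of_finite φ) hH]; rfl
  have Rr : ∫⁻ ω, ENNReal.ofReal (P (r k ω) j * Q (s k ω) j') * (φ ∘ auxHist r s k) ω ∂μ
      = ∫⁻ h, ENNReal.ofReal (P (h (Fin.last k)).1 j * Q (h (Fin.last k)).2 j') * φ h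
          ∂(μ.map (auxHist r s k)) := by
    rw [lintegral_map (measurable_of_finite _) hH]; rfl
  rw [L, Rr, lintegral_fintype, lintegral_fintype]
  refine Finset.sum_congr rfl fun h _ => ?_
  rw [Measure.map_apply hH (measurableSet_singleton _),
    Measure.map_apply hH (measurableSet_singleton _),
    Measure.restrict_apply (hH (measurableSet_singleton _))]
  let a : ℕ → Fin NN := fun l => (h ⟨min l k, by omega⟩).1
  let b : ℕ → Fin MM := fun l => (h ⟨min l k, by omega⟩).2
  have e0 : auxHist r s k ⁻¹' {h} = {ω | ∀ l ≤ k, r l ω = a l ∧ s l ω = b l} := by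
    ext ω
    simp only [Set.mem_preimage, Set.mem_singleton_iff, Set.mem_ofPred_eq]
    constructor
    · intro hh l hl
      have := congrFun hh ⟨l, by omega⟩
      simp only [a, b, min_eq_left hl]
      simp [auxHist] at this
      simp [← this]
    · intro hh
      funext l
      have h2 := hh l (by omega)
      have h3 : min (l : ℕ) k = l := min_eq_left (by omega)
      simp only [a, b, h3] at h2
      simp [auxHist, h2]
  have e1 : auxHist r s k ⁻¹' {h} ∩ {ω | r (k + 1) ω = j ∧ s (k + 1) ω = j'} =
      {ω | (r (k + 1) ω = j ∧ s (k + 1) ω = j') ∧ ∀ l ≤ k, r l ω = a l ∧ s l ω = b l} := by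
    rw [e0]; ext ω; simp only [Set.mem_inter_iff, Set.mem_ofPred_eq]; tauto
  rw [e1, e0, aux_joint hP0 hQ0 mr ms indep]
  have ea : a k = (h (Fin.last k)).1 := by simp [a, Fin.last]
  have eb : b k = (h (Fin.last k)).2 := by simp [b, Fin.last]
  rw [ea, eb]
  ring
end prob

/-- Recursion for `r̄`. -/
def auxNext {NN MM T : ℕ} [NeZero T] (f : Fin MM → Bool) (χ : XT NN MM T) (i : Fin NN)
    (j : Fin MM) : XT NN MM T :=
  if f j = true then (i, j, i, 0) else (i, j, χ.2.2.1, χ.2.2.2 + 1)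

theorem aux_intToFin_zero (T : ℕ) [NeZero T] : intToFin T 0 = 0 := by
  ext; simp [intToFin]

theorem aux_intToFin_succ (T : ℕ) [NeZero T] (a : ℤ) : intToFin T (a + 1) = intToFin T a + 1 := by
  have hT : 0 < (T : ℤ) := by exact_mod_cast Nat.pos_of_ne_zero (NeZero.ne T)
  have h1 : 0 ≤ a % (T : ℤ) := Int.emod_nonneg a (by omega)
  have h2 : a % (T : ℤ) < (T : ℤ) := Int.emod_lt_of_pos a hT
  have h3 : 0 ≤ (a + 1) % (T : ℤ) := Int.emod_nonneg _ (by omega)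
  ext
  rw [Fin.val_add, Fin.val_one']
  simp only [intToFin]
  zify
  rw [Int.toNat_of_nonneg h1, Int.toNat_of_nonneg h3]
  simp [Int.add_emod]

theorem aux_rbar_succ {Ω : Type} {NN MM T : ℕ} [NeZero T] (r : ℕ → Ω → Fin NN)
    (s : ℕ → Ω → Fin MM) (f : Fin MM → Bool) (τ₀ : ℤ) (σ₀ : Fin NN) (k : ℕ) (ω : Ω) :
    rbarProc (T := T) r s f τ₀ σ₀ (k + 1) ω
      = auxNext f (rbarProc r s f τ₀ σ₀ k ω) (r (k + 1) ω) (s (k + 1) ω) := by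
  classical
  by_cases hf : f (s (k + 1) ω) = true
  · have hex : ∃ j ≤ k + 1, f (s j ω) = true := ⟨k + 1, le_rfl, hf⟩
    have hg : Nat.findGreatest (fun j => f (s j ω) = true) (k + 1) = k + 1 :=
      Nat.findGreatest_eq hf
    have h1 : sigmaProc r s f σ₀ (k + 1) ω = r (k + 1) ω := by
      unfold sigmaProc; rw [if_pos hex]; congr 1
    have h2 : tauZ s f τ₀ (k + 1) ω = ((k + 1 : ℕ) : ℤ) := by
      unfold tauZ; rw [if_pos hex]; congr 1
    simp only [rbarProc, auxNext, if_pos hf, h1, rhoProc, h2, sub_self, aux_intToFin_zero]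
  · have hiff : (∃ j ≤ k + 1, f (s j ω) = true) ↔ ∃ j ≤ k, f (s j ω) = true := by
      constructor
      · rintro ⟨j, hj, h⟩
        refine ⟨j, ?_, h⟩
        rcases Nat.lt_or_ge k j with h' | h'
        · have : j = k + 1 := by omega
          subst this; exact absurd h hf
        · exact h'
      · rintro ⟨j, hj, h⟩; exact ⟨j, by omega, h⟩
    have hg : ∀ [DecidablePred (fun j => f (s j ω) = true)],
        Nat.findGreatest (fun j => f (s j ω) = true) (k + 1)
        = Nat.findGreatest (fun j => f (s j ω) = true) k := by
      intro _; exact Nat.findGreatest_of_not hf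
    have h1 : sigmaProc r s f σ₀ (k + 1) ω = sigmaProc r s f σ₀ k ω := by
      unfold sigmaProc; simp only [hiff, hg]
    have h2 : tauZ s f τ₀ (k + 1) ω = tauZ s f τ₀ k ω := by
      unfold tauZ; simp only [hiff, hg]
    have h3 : ((k + 1 : ℕ) : ℤ) - tauZ s f τ₀ k ω = ((k : ℤ) - tauZ s f τ₀ k ω) + 1 := by
      push_cast; ring
    simp only [rbarProc, auxNext, if_neg hf, h1, rhoProc, h2, h3, aux_intToFin_succ]

theorem aux_rbar_mem {Ω : Type} {NN MM T : ℕ} [NeZero T] (r : ℕ → Ω → Fin NN)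
    (s : ℕ → Ω → Fin MM) (f : Fin MM → Bool) (τ₀ : ℤ) (σ₀ : Fin NN) (k : ℕ) (ω : Ω) :
    inX f (rbarProc (T := T) r s f τ₀ σ₀ k ω) := by
  cases k with
  | zero =>
    intro h
    have h' : f (s 0 ω) = true := h
    simp [rbarProc, sigmaProc, rhoProc, tauZ, h', aux_intToFin_zero]
  | succ k =>
    rw [aux_rbar_succ]
    unfold auxNext
    split_ifs with h
    · intro _; exact ⟨rfl, rfl⟩
    · intro h'; exact absurd h' h

theorem aux_rbar_dep {Ω : Type} {NN MM T : ℕ} [NeZero T] (r : ℕ → Ω → Fin NN)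
    (s : ℕ → Ω → Fin MM) (f : Fin MM → Bool) (τ₀ : ℤ) (σ₀ : Fin NN) (k : ℕ) :
    AuxDep r s k (rbarProc (T := T) r s f τ₀ σ₀ k) := by
  induction k with
  | zero =>
    intro ω ω' h
    have := h 0 le_rfl
    simp [rbarProc, sigmaProc, rhoProc, tauZ, this.1, this.2]
  | succ k ih =>
    intro ω ω' h
    rw [aux_rbar_succ, aux_rbar_succ, ih ω ω' (fun l hl => h l (by omega)),
      (h (k + 1) le_rfl).1, (h (k + 1) le_rfl).2]

theorem aux_traj_dep {Ω : Type} {NN MM T n q : ℕ} [NeZero T] (r : ℕ → Ω → Fin NN)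
    (s : ℕ → Ω → Fin MM) (f : Fin MM → Bool) (τ₀ : ℤ) (σ₀ : Fin NN)
    (Am : XT NN MM T → Matrix (Fin n) (Fin n) ℝ) (Em : XT NN MM T → Matrix (Fin n) (Fin q) ℝ)
    (x0 : Fin n → ℝ) (k : ℕ) :
    AuxDep r s k (traj Am Em (rbarProc (T := T) r s f τ₀ σ₀) (fun _ _ => 0) x0 (k + 1)) := by
  induction k with
  | zero =>
    intro ω ω' h
    simp only [traj]
    rw [aux_rbar_dep r s f τ₀ σ₀ 0 ω ω' h]
  | succ k ih =>
    intro ω ω' h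
    have e := ih ω ω' (fun l hl => h l (by omega))
    have e2 := aux_rbar_dep (T := T) r s f τ₀ σ₀ (k + 1) ω ω' h
    change Am _ *ᵥ (traj Am Em _ _ x0 (k + 1) ω) + Em _ *ᵥ _
      = Am _ *ᵥ (traj Am Em _ _ x0 (k + 1) ω') + Em _ *ᵥ _
    rw [e, e2]

theorem aux_pbar {NN MM T : ℕ} [NeZero T] (P : Matrix (Fin NN) (Fin NN) ℝ)
    (Q : Matrix (Fin MM) (Fin MM) ℝ) (f : Fin MM → Bool) (χ χ' : XT NN MM T) :
    pbar P Q f χ χ' = if auxNext f χ χ'.1 χ'.2.1 = χ' then P χ.1 χ'.1 * Q χ.2.1 χ'.2.1 else 0 := by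
  obtain ⟨a', b', c', d'⟩ := χ'
  unfold pbar auxNext
  by_cases h : f b' = true
  · simp [h, eq_comm]
  · simp [h, eq_comm]
section prob2
variable {Ω : Type} [mΩ : MeasurableSpace Ω]

theorem aux_lintegral_fiber {β : Type} [Fintype β] [MeasurableSpace β] [MeasurableSingletonClass β]
    (μ : Measure Ω) (Y : Ω → β) (hY : Measurable Y) (g : Ω → ENNReal) :
    ∫⁻ ω, g ω ∂μ = ∑ y, ∫⁻ ω in {ω | Y ω = y}, g ω ∂μ := by
  have hm : ∀ y, MeasurableSet {ω | Y ω = y} := fun y => hY (measurableSet_singleton y)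
  have hU : (⋃ y, {ω | Y ω = y}) = Set.univ := by
    ext ω; simp
  rw [← setLIntegral_univ g, ← hU, lintegral_iUnion hm, tsum_fintype]
  intro a b hab
  refine Set.disjoint_left.mpr fun ω (ha : Y ω = a) (hb : Y ω = b) => hab (ha.symm.trans hb)

theorem aux_trans {NN MM T : ℕ} [NeZero T] {μ : Measure Ω} [IsProbabilityMeasure μ]
    {P : Matrix (Fin NN) (Fin NN) ℝ} {Q : Matrix (Fin MM) (Fin MM) ℝ}
    (hP0 : ∀ i j, 0 ≤ P i j) (hQ0 : ∀ i j, 0 ≤ Q i j)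
    {r : ℕ → Ω → Fin NN} {s : ℕ → Ω → Fin MM}
    (hr : ∀ k, Measurable (r k)) (hs : ∀ k, Measurable (s k))
    (mr : IsMarkovChain μ r fun i j => P i j) (ms : IsMarkovChain μ s fun i j => Q i j)
    (indep : IndepFun (fun ω l => r l ω) (fun ω l => s l ω) μ)
    (f : Fin MM → Bool) (τ₀ : ℤ) (σ₀ : Fin NN)
    (k : ℕ) (χ : XT NN MM T) (g : Ω → ENNReal) (hg : AuxDep r s k g) :
    ∫⁻ ω in {ω | rbarProc r s f τ₀ σ₀ (k + 1) ω = χ}, g ω ∂μ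
      = ∑ χ' : XT NN MM T, ENNReal.ofReal (pbar P Q f χ' χ) *
          ∫⁻ ω in {ω | rbarProc r s f τ₀ σ₀ k ω = χ'}, g ω ∂μ := by
  classical
  haveI : Nonempty (XT NN MM T) := ⟨χ⟩
  have hmb : ∀ k, Measurable (rbarProc (T := T) r s f τ₀ σ₀ k) := fun k =>
    auxDep_meas hr hs (aux_rbar_dep r s f τ₀ σ₀ k)
  have hgm : Measurable g := auxDep_meas hr hs hg
  let g' : Ω → ENNReal := fun ω =>
    if auxNext f (rbarProc r s f τ₀ σ₀ k ω) χ.1 χ.2.1 = χ then g ω else 0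
  have hg' : AuxDep r s k g' := by
    intro ω ω' h
    simp only [g']
    rw [aux_rbar_dep r s f τ₀ σ₀ k ω ω' h, hg ω ω' h]
  have hE : MeasurableSet {ω | r (k + 1) ω = χ.1 ∧ s (k + 1) ω = χ.2.1} :=
    (measurableSet_eq_fun (hr _) measurable_const).inter
      (measurableSet_eq_fun (hs _) measurable_const)
  have hB : MeasurableSet {ω | rbarProc r s f τ₀ σ₀ (k + 1) ω = χ} :=
    (hmb (k + 1)) (measurableSet_singleton χ)
  have h1 : ∫⁻ ω in {ω | rbarProc r s f τ₀ σ₀ (k + 1) ω = χ}, g ω ∂μ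
      = ∫⁻ ω in {ω | r (k + 1) ω = χ.1 ∧ s (k + 1) ω = χ.2.1}, g' ω ∂μ := by
    rw [← lintegral_indicator hB, ← lintegral_indicator hE]
    refine lintegral_congr fun ω => ?_
    simp only [Set.indicator_apply, Set.mem_ofPred_eq, g']
    by_cases hω : r (k + 1) ω = χ.1 ∧ s (k + 1) ω = χ.2.1
    · have hn := aux_rbar_succ (T := T) r s f τ₀ σ₀ k ω
      rw [hω.1, hω.2] at hn
      rw [if_pos hω]
      simp only [hn]
    · rw [if_neg hω, if_neg]
      intro h
      apply hω
      rw [← h]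
      exact ⟨rfl, rfl⟩
  have h2 : ∫⁻ ω, ENNReal.ofReal (P (r k ω) χ.1 * Q (s k ω) χ.2.1) * g' ω ∂μ
      = ∫⁻ ω, ENNReal.ofReal (pbar P Q f (rbarProc r s f τ₀ σ₀ k ω) χ) * g ω ∂μ := by
    refine lintegral_congr fun ω => ?_
    rw [aux_pbar]
    simp only [g']
    split_ifs
    · rfl
    · simp
  rw [h1, aux_step hP0 hQ0 hr hs mr ms indep k _ _ g' hg', h2,
    aux_lintegral_fiber μ _ (hmb k)]
  refine Finset.sum_congr rfl fun χ' _ => ?_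
  rw [← lintegral_const_mul _ hgm]
  refine setLIntegral_congr_fun ((hmb k) (measurableSet_singleton χ')) ?_
  intro ω hω
  have : rbarProc r s f τ₀ σ₀ k ω = χ' := hω
  simp only [this]

theorem aux_traj_succ {NN MM T n q : ℕ} [NeZero T] (Am : XT NN MM T → Matrix (Fin n) (Fin n) ℝ)
    (Em : XT NN MM T → Matrix (Fin n) (Fin q) ℝ) (mode : ℕ → Ω → XT NN MM T) (x0 : Fin n → ℝ)
    (k : ℕ) (ω : Ω) :
    traj Am Em mode (fun _ _ => 0) x0 (k + 1) ω =
      Am (mode k ω) *ᵥ traj Am Em mode (fun _ _ => 0) x0 k ω := by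
  rw [traj.eq_2]
  have : (0 : Fin q → ℝ) = fun _ => 0 := rfl
  simp

theorem aux_main {NN MM T n q : ℕ} [NeZero T] {μ : Measure Ω} [IsProbabilityMeasure μ]
    {P : Matrix (Fin NN) (Fin NN) ℝ} {Q : Matrix (Fin MM) (Fin MM) ℝ}
    (hP0 : ∀ i j, 0 ≤ P i j) (hQ0 : ∀ i j, 0 ≤ Q i j)
    {r : ℕ → Ω → Fin NN} {s : ℕ → Ω → Fin MM}
    (hr : ∀ k, Measurable (r k)) (hs : ∀ k, Measurable (s k))
    (mr : IsMarkovChain μ r fun i j => P i j) (ms : IsMarkovChain μ s fun i j => Q i j)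
    (indep : IndepFun (fun ω l => r l ω) (fun ω l => s l ω) μ)
    (f : Fin MM → Bool) (τ₀ : ℤ) (σ₀ : Fin NN)
    (Am : XT NN MM T → Matrix (Fin n) (Fin n) ℝ) (Em : XT NN MM T → Matrix (Fin n) (Fin q) ℝ)
    (R : XT NN MM T → Matrix (Fin n) (Fin n) ℝ) (C0 lam : ℝ) (hC0 : 0 ≤ C0) (hlam : 0 ≤ lam)
    (hR : ∀ χ, inX f χ → ∀ u, 0 ≤ u ⬝ᵥ (R χ *ᵥ u))
    (h0 : ∀ χ, inX f χ → ∀ u, ((Am χ)ᵀ *ᵥ u) ⬝ᵥ ((Am χ)ᵀ *ᵥ u) ≤ C0 * (u ⬝ᵥ (R χ *ᵥ u)))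
    (h1 : ∀ χ, inX f χ → ∀ u, ((Am χ)ᵀ *ᵥ u) ⬝ᵥ (Dop P Q f R χ *ᵥ ((Am χ)ᵀ *ᵥ u))
      ≤ lam * (u ⬝ᵥ (R χ *ᵥ u)))
    (x0 : Fin n → ℝ) (k : ℕ) : ∀ (χ : XT NN MM T), inX f χ → ∀ u : Fin n → ℝ,
    ∫⁻ ω in {ω | rbarProc r s f τ₀ σ₀ k ω = χ}, ENNReal.ofReal
      ((u ⬝ᵥ traj Am Em (rbarProc r s f τ₀ σ₀) (fun _ _ => 0) x0 (k + 1) ω) ^ 2) ∂μ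
      ≤ ENNReal.ofReal (C0 * (∑ i, x0 i ^ 2) * lam ^ k * (u ⬝ᵥ (R χ *ᵥ u))) := by
  classical
  have hmb : ∀ k (χ : XT NN MM T), MeasurableSet {ω | rbarProc r s f τ₀ σ₀ k ω = χ} := by
    intro k χ
    haveI : Nonempty (XT NN MM T) := ⟨χ⟩
    exact (auxDep_meas hr hs (aux_rbar_dep r s f τ₀ σ₀ k)) (measurableSet_singleton χ)
  have hx0 : 0 ≤ ∑ i, x0 i ^ 2 := Finset.sum_nonneg fun i _ => sq_nonneg _
  have hadj : ∀ (M : Matrix (Fin n) (Fin n) ℝ) (u x : Fin n → ℝ),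
      u ⬝ᵥ (M *ᵥ x) = (Mᵀ *ᵥ u) ⬝ᵥ x := by
    intro M u x; rw [dotProduct_mulVec, mulVec_transpose]
  induction k with
  | zero =>
    intro χ hχ u
    have hb : ∀ ω ∈ {ω | rbarProc r s f τ₀ σ₀ 0 ω = χ}, ENNReal.ofReal
      ((u ⬝ᵥ traj Am Em (rbarProc r s f τ₀ σ₀) (fun _ _ => 0) x0 (0 + 1) ω) ^ 2) ≤
      ENNReal.ofReal (C0 * (∑ i, x0 i ^ 2) * lam ^ 0 * (u ⬝ᵥ (R χ *ᵥ u))) := by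
      intro ω hω
      have hω' : rbarProc r s f τ₀ σ₀ 0 ω = χ := hω
      apply ENNReal.ofReal_le_ofReal
      rw [aux_traj_succ, hω', hadj]
      have hcs : (((Am χ)ᵀ *ᵥ u) ⬝ᵥ x0) ^ 2 ≤
          (((Am χ)ᵀ *ᵥ u) ⬝ᵥ ((Am χ)ᵀ *ᵥ u)) * ∑ i, x0 i ^ 2 := by
        have := Finset.sum_mul_sq_le_sq_mul_sq Finset.univ ((Am χ)ᵀ *ᵥ u) x0
        simpa [dotProduct, sq] using this
      have := mul_le_mul_of_nonneg_right (h0 χ hχ u) hx0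
      calc _ ≤ _ := hcs
        _ ≤ _ := this
        _ = _ := by ring
    refine (setLIntegral_mono' (hmb 0 χ) hb).trans ?_
    rw [setLIntegral_const]
    exact mul_le_of_le_one_right' prob_le_one
  | succ k ih =>
    intro χ hχ u
    set v := (Am χ)ᵀ *ᵥ u with hv
    have e1 : ∫⁻ ω in {ω | rbarProc r s f τ₀ σ₀ (k + 1) ω = χ}, ENNReal.ofReal
      ((u ⬝ᵥ traj Am Em (rbarProc r s f τ₀ σ₀) (fun _ _ => 0) x0 (k + 1 + 1) ω) ^ 2) ∂μ
      = ∫⁻ ω in {ω | rbarProc r s f τ₀ σ₀ (k + 1) ω = χ}, ENNReal.ofReal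
      ((v ⬝ᵥ traj Am Em (rbarProc r s f τ₀ σ₀) (fun _ _ => 0) x0 (k + 1) ω) ^ 2) ∂μ := by
      refine setLIntegral_congr_fun (hmb (k + 1) χ) ?_
      intro ω hω
      have hω' : rbarProc r s f τ₀ σ₀ (k + 1) ω = χ := hω
      simp only
      rw [aux_traj_succ _ _ _ _ (k + 1), hω', hadj]
    have hdep : AuxDep r s k (fun ω => ENNReal.ofReal
      ((v ⬝ᵥ traj Am Em (rbarProc r s f τ₀ σ₀) (fun _ _ => 0) x0 (k + 1) ω) ^ 2)) := by
      intro ω ω' h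
      simp only
      rw [aux_traj_dep r s f τ₀ σ₀ Am Em x0 k ω ω' h]
    rw [e1, aux_trans hP0 hQ0 hr hs mr ms indep f τ₀ σ₀ k χ _ hdep]
    have hterm : ∀ χ' : XT NN MM T, ENNReal.ofReal (pbar P Q f χ' χ) *
          ∫⁻ ω in {ω | rbarProc r s f τ₀ σ₀ k ω = χ'}, ENNReal.ofReal
      ((v ⬝ᵥ traj Am Em (rbarProc r s f τ₀ σ₀) (fun _ _ => 0) x0 (k + 1) ω) ^ 2) ∂μ
      ≤ ENNReal.ofReal (C0 * (∑ i, x0 i ^ 2) * lam ^ k *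
        if inX f χ' then pbar P Q f χ' χ * (v ⬝ᵥ (R χ' *ᵥ v)) else 0) := by
      intro χ'
      have hp := aux_pbar_nonneg P Q hP0 hQ0 f χ' χ
      split_ifs with hx
      · refine (mul_le_mul_right (ih χ' hx v) _).trans ?_
        rw [← ENNReal.ofReal_mul hp]
        apply ENNReal.ofReal_le_ofReal
        apply le_of_eq; ring
      · have : {ω | rbarProc r s f τ₀ σ₀ k ω = χ'} = ∅ := by
          ext ω
          simp only [Set.mem_ofPred_eq, Set.mem_empty_iff_false, iff_false]
          rintro rfl
          exact hx (aux_rbar_mem r s f τ₀ σ₀ k ω)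
        rw [this]; simp
    refine (Finset.sum_le_sum fun χ' _ => hterm χ').trans ?_
    rw [← ENNReal.ofReal_sum_of_nonneg]
    · rw [← Finset.mul_sum, ← aux_Dop]
      apply ENNReal.ofReal_le_ofReal
      have := mul_le_mul_of_nonneg_left (h1 χ hχ u)
        (show 0 ≤ C0 * (∑ i, x0 i ^ 2) * lam ^ k by positivity)
      calc _ ≤ _ := this
        _ = _ := by ring
    · intro χ' _
      have hp := aux_pbar_nonneg P Q hP0 hQ0 f χ' χ
      split_ifs with hx
      · have := hR χ' hx v
        positivity
      · simp

end prob2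

end Helpers

/-- the stabilization LMIs imply invertibility of the `G_{γ,δ}` and,
for any gains with `K_{γ,δ} = F_{γ,δ} G_{γ,δ}⁻¹` on admissible pairs, mean square
stability of the closed-loop system `Σ_K`. -/
theorem stabilization_lmi_mss
    {NN MM T n m q ℓ : ℕ} [NeZero NN] [NeZero MM] [NeZero T]
    [NeZero n] [NeZero m] [NeZero q] [NeZero ℓ]
    (P : Matrix (Fin NN) (Fin NN) ℝ) (Qm : Matrix (Fin MM) (Fin MM) ℝ)
    (hP0 : ∀ i j, 0 ≤ P i j) (hP1 : ∀ i, ∑ j, P i j = 1)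
    (hQ0 : ∀ i j, 0 ≤ Qm i j) (hQ1 : ∀ i, ∑ j, Qm i j = 1)
    (f : Fin MM → Bool)
    (A : Fin NN → Matrix (Fin n) (Fin n) ℝ) (B : Fin NN → Matrix (Fin n) (Fin m) ℝ)
    (C : Fin NN → Matrix (Fin ℓ) (Fin n) ℝ) (D : Fin NN → Matrix (Fin ℓ) (Fin m) ℝ)
    (E : Fin NN → Matrix (Fin n) (Fin q) ℝ)
    (R : XT NN MM T → Matrix (Fin n) (Fin n) ℝ)
    (hRsym : ∀ χ, inX f χ → (R χ).IsHermitian)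
    (G : Fin NN → Fin T → Matrix (Fin n) (Fin n) ℝ)
    (F : Fin NN → Fin T → Matrix (Fin m) (Fin n) ℝ)
    (hLMI : ∀ χ : XT NN MM T, inX f χ →
      (Matrix.fromBlocks (R χ)
        (A χ.1 * G χ.2.2.1 χ.2.2.2 + B χ.1 * F χ.2.2.1 χ.2.2.2)
        (A χ.1 * G χ.2.2.1 χ.2.2.2 + B χ.1 * F χ.2.2.1 χ.2.2.2)ᵀ
        (G χ.2.2.1 χ.2.2.2 + (G χ.2.2.1 χ.2.2.2)ᵀ - Dop P Qm f R χ)).PosDef) :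
    (∀ g d, Admissible f g d → IsUnit (G g d)) ∧
    ∀ K : Fin NN → Fin T → Matrix (Fin m) (Fin n) ℝ,
      (∀ g d, Admissible f g d → K g d = F g d * (G g d)⁻¹) →
      MeanSquareStable P Qm f A B E K := by
  classical
  have hRpos : ∀ χ, inX f χ → ∀ u, u ≠ 0 → 0 < u ⬝ᵥ (R χ *ᵥ u) := by
    intro χ hχ u hu
    have := aux_block _ _ _ (hLMI χ hχ) u 0 (Or.inl hu)
    simpa using this
  have hRnn : ∀ χ, inX f χ → ∀ u, 0 ≤ u ⬝ᵥ (R χ *ᵥ u) := by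
    intro χ hχ u
    by_cases hu : u = 0
    · simp [hu]
    · exact (hRpos χ hχ u hu).le
  have hDnn : ∀ χ u, 0 ≤ u ⬝ᵥ (Dop P Qm f R χ *ᵥ u) := by
    intro χ u
    rw [aux_Dop]
    refine Finset.sum_nonneg fun χ' _ => ?_
    split_ifs with hx
    · exact mul_nonneg (aux_pbar_nonneg P Qm hP0 hQ0 f χ' χ) (hRnn χ' hx u)
    · exact le_rfl
  have hunit : ∀ g d, Admissible f g d → IsUnit (G g d) := by
    rintro g d ⟨α, β, hx⟩
    refine aux_isUnit (G g d) (Dop P Qm f R (α, β, g, d)) (hDnn _) fun v hv => ?_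
    have := aux_block _ _ _ (hLMI _ hx) 0 v (Or.inr hv)
    simpa using this
  refine ⟨hunit, fun K hK => ?_⟩
  have hlyap : ∀ χ : XT NN MM T, inX f χ → ∀ u, u ≠ 0 →
      ((AKmat A B K χ)ᵀ *ᵥ u) ⬝ᵥ (Dop P Qm f R χ *ᵥ ((AKmat A B K χ)ᵀ *ᵥ u))
        < u ⬝ᵥ (R χ *ᵥ u) := by
    intro χ hχ u hu
    have hadm : Admissible (T := T) f χ.2.2.1 χ.2.2.2 := ⟨χ.1, χ.2.1, hχ⟩
    have hG := hunit _ _ hadm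
    refine aux_lyap _ (AKmat A B K χ) (G χ.2.2.1 χ.2.2.2) _ _ ?_ (hLMI χ hχ) u hu
    rw [AKmat, hK _ _ hadm, Matrix.add_mul, Matrix.mul_assoc, Matrix.mul_assoc,
      Matrix.nonsing_inv_mul _ ((Matrix.isUnit_iff_isUnit_det _).1 hG), Matrix.mul_one]
  -- uniform contraction constants
  have hex1 : ∀ χ : XT NN MM T, ∃ c : ℝ, 0 ≤ c ∧ (inX f χ → ∀ u,
      u ⬝ᵥ (R χ *ᵥ u) ≤ c * (u ⬝ᵥ (R χ *ᵥ u) -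
      ((AKmat A B K χ)ᵀ *ᵥ u) ⬝ᵥ (Dop P Qm f R χ *ᵥ ((AKmat A B K χ)ᵀ *ᵥ u)))) := by
    intro χ
    by_cases hχ : inX f χ
    · obtain ⟨c, hc, h⟩ := aux_dominate (fun u => u ⬝ᵥ (R χ *ᵥ u))
        (fun u => u ⬝ᵥ (R χ *ᵥ u) -
          ((AKmat A B K χ)ᵀ *ᵥ u) ⬝ᵥ (Dop P Qm f R χ *ᵥ ((AKmat A B K χ)ᵀ *ᵥ u)))
        (by fun_prop) (by fun_prop) (fun t u => aux_quad_smul _ t u)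
        (fun t u => by
          rw [mulVec_smul (AKmat A B K χ)ᵀ, aux_quad_smul, aux_quad_smul]; ring)
        (fun u hu => sub_pos.mpr (hlyap χ hχ u hu))
      exact ⟨c, hc, fun _ => h⟩
    · exact ⟨0, le_rfl, fun h => absurd h hχ⟩
  choose c1 hc1 hc1' using hex1
  have hex0 : ∀ χ : XT NN MM T, ∃ c : ℝ, 0 ≤ c ∧ (inX f χ → ∀ u,
      ((AKmat A B K χ)ᵀ *ᵥ u) ⬝ᵥ ((AKmat A B K χ)ᵀ *ᵥ u) ≤ c * (u ⬝ᵥ (R χ *ᵥ u))) := by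
    intro χ
    by_cases hχ : inX f χ
    · obtain ⟨c, hc, h⟩ := aux_dominate
        (fun u => ((AKmat A B K χ)ᵀ *ᵥ u) ⬝ᵥ ((AKmat A B K χ)ᵀ *ᵥ u))
        (fun u => u ⬝ᵥ (R χ *ᵥ u))
        (by fun_prop) (by fun_prop)
        (fun t u => by
          simp only [mulVec_smul, smul_dotProduct, dotProduct_smul, smul_eq_mul]; ring)
        (fun t u => aux_quad_smul _ t u)
        (hRpos χ hχ)
      exact ⟨c, hc, fun _ => h⟩
    · exact ⟨0, le_rfl, fun h => absurd h hχ⟩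
  choose c0 hc0 hc0' using hex0
  set C0 : ℝ := ∑ χ, c0 χ with hC0def
  set C1 : ℝ := 2 + ∑ χ, c1 χ with hC1def
  have hC0 : 0 ≤ C0 := Finset.sum_nonneg fun χ _ => hc0 χ
  have hC1 : 2 ≤ C1 := by
    have : 0 ≤ ∑ χ, c1 χ := Finset.sum_nonneg fun χ _ => hc1 χ
    linarith
  have hC0le : ∀ χ, c0 χ ≤ C0 := fun χ =>
    Finset.single_le_sum (fun χ _ => hc0 χ) (Finset.mem_univ χ)
  have hC1le : ∀ χ, c1 χ ≤ C1 := fun χ => by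
    have := Finset.single_le_sum (fun χ _ => hc1 χ) (Finset.mem_univ χ)
    linarith
  set lam : ℝ := 1 - C1⁻¹ with hlamdef
  have hinv : C1⁻¹ ≤ 2⁻¹ := inv_anti₀ (by norm_num) hC1
  have hinv0 : 0 < C1⁻¹ := by positivity
  have hlam0 : 0 < lam := by norm_num at hinv; linarith
  have hlam1 : lam < 1 := by linarith
  have h0 : ∀ χ, inX f χ → ∀ u, ((AKmat A B K χ)ᵀ *ᵥ u) ⬝ᵥ ((AKmat A B K χ)ᵀ *ᵥ u)
      ≤ C0 * (u ⬝ᵥ (R χ *ᵥ u)) := fun χ hχ u =>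
    (hc0' χ hχ u).trans (mul_le_mul_of_nonneg_right (hC0le χ) (hRnn χ hχ u))
  have h1 : ∀ χ, inX f χ → ∀ u,
      ((AKmat A B K χ)ᵀ *ᵥ u) ⬝ᵥ (Dop P Qm f R χ *ᵥ ((AKmat A B K χ)ᵀ *ᵥ u))
      ≤ lam * (u ⬝ᵥ (R χ *ᵥ u)) := by
    intro χ hχ u
    have hd : 0 ≤ u ⬝ᵥ (R χ *ᵥ u) -
      ((AKmat A B K χ)ᵀ *ᵥ u) ⬝ᵥ (Dop P Qm f R χ *ᵥ ((AKmat A B K χ)ᵀ *ᵥ u)) := by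
      by_cases hu : u = 0
      · simp [hu]
      · exact (sub_pos.mpr (hlyap χ hχ u hu)).le
    have h2 := (hc1' χ hχ u).trans (mul_le_mul_of_nonneg_right (hC1le χ) hd)
    have h3 := mul_le_mul_of_nonneg_left h2 hinv0.le
    rw [← mul_assoc, inv_mul_cancel₀ (by positivity), one_mul] at h3
    rw [hlamdef, sub_mul, one_mul]
    linarith
  set tr : ℝ := ∑ χ : XT NN MM T, if inX f χ then
    ∑ i, (Pi.single i 1 : Fin n → ℝ) ⬝ᵥ (R χ *ᵥ (Pi.single i 1)) else 0 with htr
  have htr0 : 0 ≤ tr := Finset.sum_nonneg fun χ _ => by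
    split_ifs with hx
    · exact Finset.sum_nonneg fun i _ => hRnn χ hx _
    · exact le_rfl
  refine ⟨1 + C0 * tr * lam⁻¹, by positivity, lam, hlam0.le, hlam1, ?_⟩
  intro S τ₀ _ σ₀ r₀ s₀ _ x0 k
  letI := S.inst
  haveI := S.prob
  have hx0 : 0 ≤ ∑ i, x0 i ^ 2 := Finset.sum_nonneg fun i _ => sq_nonneg _
  cases k with
  | zero =>
    simp only [traj, sqE, lintegral_const, measure_univ, mul_one, pow_zero]
    apply ENNReal.ofReal_le_ofReal
    have : 0 ≤ C0 * tr * lam⁻¹ := by positivity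
    nlinarith
  | succ k =>
    have hmain := aux_main hP0 hQ0 S.meas_r S.meas_s S.markov_r S.markov_s S.indep f τ₀ σ₀
      (AKmat A B K) (fun χ => E χ.1) R C0 lam hC0 hlam0.le hRnn h0 h1 x0 k
    haveI : Nonempty (XT NN MM T) := ⟨(σ₀, s₀, σ₀, 0)⟩
    have hmb : Measurable (rbarProc (T := T) S.r S.s f τ₀ σ₀ k) :=
      auxDep_meas S.meas_r S.meas_s (aux_rbar_dep S.r S.s f τ₀ σ₀ k)
    have hxm : Measurable (traj (AKmat A B K) (fun χ => E χ.1)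
        (rbarProc (T := T) S.r S.s f τ₀ σ₀) (fun _ _ => 0) x0 (k + 1)) :=
      auxDep_meas S.meas_r S.meas_s (aux_traj_dep S.r S.s f τ₀ σ₀ _ _ x0 k)
    rw [aux_lintegral_fiber S.μ _ hmb]
    have hterm : ∀ χ : XT NN MM T, ∫⁻ ω in {ω | rbarProc S.r S.s f τ₀ σ₀ k ω = χ},
        sqE (traj (AKmat A B K) (fun χ => E χ.1)
        (rbarProc (T := T) S.r S.s f τ₀ σ₀) (fun _ _ => 0) x0 (k + 1) ω) ∂S.μ
        ≤ ENNReal.ofReal (C0 * (∑ i, x0 i ^ 2) * lam ^ k * if inX f χ then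
          ∑ i, (Pi.single i 1 : Fin n → ℝ) ⬝ᵥ (R χ *ᵥ (Pi.single i 1)) else 0) := by
      intro χ
      split_ifs with hx
      · have e : ∀ v : Fin n → ℝ, sqE v =
            ∑ i, ENNReal.ofReal (((Pi.single i 1 : Fin n → ℝ) ⬝ᵥ v) ^ 2) := by
          intro v
          rw [sqE, ENNReal.ofReal_sum_of_nonneg (fun i _ => sq_nonneg _)]
          simp
        simp only [e]
        rw [lintegral_finsetSum]
        · rw [Finset.mul_sum, ENNReal.ofReal_sum_of_nonneg]
          · exact Finset.sum_le_sum fun i _ => hmain χ hx _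
          · intro i _
            have := hRnn χ hx (Pi.single i 1)
            positivity
        · intro i _
          simp only [single_dotProduct, one_mul]
          have := (measurable_pi_apply i).comp hxm
          exact (this.pow_const 2).ennreal_ofReal
      · have : {ω | rbarProc S.r S.s f τ₀ σ₀ k ω = χ} = ∅ := by
          ext ω
          simp only [Set.mem_ofPred_eq, Set.mem_empty_iff_false, iff_false]
          rintro rfl
          exact hx (aux_rbar_mem S.r S.s f τ₀ σ₀ k ω)
        rw [this]; simp
    refine (Finset.sum_le_sum fun χ _ => hterm χ).trans ?_
    rw [← ENNReal.ofReal_sum_of_nonneg]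
    · rw [← Finset.mul_sum, ← htr]
      apply ENNReal.ofReal_le_ofReal
      have e1 : (1 + C0 * tr * lam⁻¹) * lam ^ (k + 1) * ∑ i, x0 i ^ 2
          = lam ^ (k + 1) * (∑ i, x0 i ^ 2) + C0 * (∑ i, x0 i ^ 2) * lam ^ k * tr := by
        field_simp
        ring
      rw [e1]
      have : 0 ≤ lam ^ (k + 1) * (∑ i, x0 i ^ 2) := by positivity
      linarith
    · intro χ _
      split_ifs with hx
      · have : 0 ≤ ∑ i, (Pi.single i 1 : Fin n → ℝ) ⬝ᵥ (R χ *ᵥ (Pi.single i 1)) :=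
          Finset.sum_nonneg fun i _ => hRnn χ hx _
        positivity
      · simp

end
end

section
/- Call a pair (γ,δ) ∈ [N]×[T] admissible if (α,β,γ,δ) ∈ 𝔛 for some α ∈ [N], β ∈ [M]. Let γ₀ > 0. Suppose the random initial pair (σ₀, ρ₀) has distribution ν on [N]×[T], and define the probability distribution μ̄ on 𝔛 by μ̄(α,β,γ,δ) = μ_r(α)·μ_s(β) if f(β)=1 and μ̄(α,β,γ,δ) = μ_r(α)·μ_s(β)·ν(γ,δ) if f(β)=0. Suppose matrices W_χ ∈ ℝ^{ℓ×ℓ} (symmetric), R_χ ∈ ℝ^{n×n} (symmetric), G_{γ,δ} ∈ ℝ^{n×n}, F_{γ,δ} ∈ ℝ^{m×n}, and the numbers ν(γ,δ) ≥ 0 with Σ_{γ∈[N]} Σ_{δ∈[T]} ν(γ,δ) = 1 satisfy, for every χ = (α,β,γ,δ) ∈ 𝔛: the symmetric block matrix [[R_χ − μ̄(χ) E_α E_αᵀ, A_α G_{γ,δ} + B_α F_{γ,δ}],[(A_α G_{γ,δ} + B_α F_{γ,δ})ᵀ, G_{γ,δ} + G_{γ,δ}ᵀ − D̄_χ(R)]]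 is positive definite; the symmetric block matrix [[W_χ, C_α G_{γ,δ} + D_α F_{γ,δ}],[(C_α G_{γ,δ} + D_α F_{γ,δ})ᵀ, G_{γ,δ} + G_{γ,δ}ᵀ − D̄_χ(R)]] is positive definite; and Σ_{χ∈𝔛} tr(W_χ) < γ₀. Then G_{γ,δ} is invertible for every admissible (γ,δ), and with feedback gains K_{γ,δ} = F_{γ,δ} G_{γ,δ}⁻¹ for admissible (γ,δ), the closed-loop system Σ_K is mean square stable and ‖Σ_K‖₂² < γ₀. -/
open MeasureTheory ProbabilityTheory Matrix

noncomputable section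

section Det
variable {ι : Type} [Fintype ι] {n : ℕ}

/-- Generic `D̄` operator. -/
def dsumL (p : ι → ι → ℝ) :
    (ι → Matrix (Fin n) (Fin n) ℝ) →ₗ[ℝ] (ι → Matrix (Fin n) (Fin n) ℝ) where
  toFun X := fun χ => ∑ χ', p χ' χ • X χ'
  map_add' X Y := by
    funext χ; simp [smul_add, Finset.sum_add_distrib]
  map_smul' c X := by
    funext χ; simp [Finset.smul_sum, smul_comm c]

/-- Generic second moment operator. -/
def TL (p : ι → ι → ℝ) (A : ι → Matrix (Fin n) (Fin n) ℝ) :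
    (ι → Matrix (Fin n) (Fin n) ℝ) →ₗ[ℝ] (ι → Matrix (Fin n) (Fin n) ℝ) where
  toFun X := fun χ => A χ * dsumL p X χ * (A χ)ᵀ
  map_add' X Y := by
    funext χ; simp [Matrix.mul_add, Matrix.add_mul]
  map_smul' c X := by
    funext χ; simp

/-- Generic output functional. -/
def costL {l : ℕ} (p : ι → ι → ℝ) (C : ι → Matrix (Fin l) (Fin n) ℝ) :
    (ι → Matrix (Fin n) (Fin n) ℝ) →ₗ[ℝ] ℝ where
  toFun X := ∑ χ, (C χ * dsumL p X χ * (C χ)ᵀ).trace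
  map_add' X Y := by
    simp [Matrix.mul_add, Matrix.add_mul, Finset.sum_add_distrib]
  map_smul' c X := by
    simp [Finset.mul_sum]

theorem psd_conj {a b : ℕ} {X : Matrix (Fin a) (Fin a) ℝ} (h : X.PosSemidef)
    (A : Matrix (Fin b) (Fin a) ℝ) : (A * X * Aᵀ).PosSemidef := by
  have := h.mul_mul_conjTranspose_same A
  rwa [conjTranspose_eq_transpose_of_trivial] at this

theorem psd_dsum {p : ι → ι → ℝ} (hp : ∀ a b, 0 ≤ p a b)
    {X : ι → Matrix (Fin n) (Fin n) ℝ} (h : ∀ χ, (X χ).PosSemidef) (χ : ι) :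
    (dsumL p X χ).PosSemidef :=
  posSemidef_sum _ fun χ' _ => (h χ').smul (hp χ' χ)

theorem psd_TL {p : ι → ι → ℝ} (hp : ∀ a b, 0 ≤ p a b) (A : ι → Matrix (Fin n) (Fin n) ℝ)
    {X : ι → Matrix (Fin n) (Fin n) ℝ} (h : ∀ χ, (X χ).PosSemidef) (χ : ι) :
    (TL p A X χ).PosSemidef :=
  psd_conj (psd_dsum hp h χ) _

theorem psd_TL_pow {p : ι → ι → ℝ} (hp : ∀ a b, 0 ≤ p a b)
    (A : ι → Matrix (Fin n) (Fin n) ℝ)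
    {X : ι → Matrix (Fin n) (Fin n) ℝ} (h : ∀ χ, (X χ).PosSemidef) (k : ℕ) (χ : ι) :
    ((TL p A ^ k) X χ).PosSemidef := by
  induction k generalizing χ with
  | zero => exact h χ
  | succ k ih =>
    rw [pow_succ']
    exact psd_TL hp A ih χ

theorem cost_nonneg {l : ℕ} {p : ι → ι → ℝ} (hp : ∀ a b, 0 ≤ p a b)
    (C : ι → Matrix (Fin l) (Fin n) ℝ)
    {X : ι → Matrix (Fin n) (Fin n) ℝ} (h : ∀ χ, (X χ).PosSemidef) :
    0 ≤ costL p C X :=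
  Finset.sum_nonneg fun χ _ => (psd_conj (psd_dsum hp h χ) _).trace_nonneg

theorem partial_sum_le {p : ι → ι → ℝ} (hp : ∀ a b, 0 ≤ p a b)
    (A : ι → Matrix (Fin n) (Fin n) ℝ) {R Y : ι → Matrix (Fin n) (Fin n) ℝ}
    (hR : ∀ χ, (R χ).PosSemidef)
    (h : ∀ χ, (R χ - Y χ - TL p A R χ).PosSemidef) (k : ℕ) (χ : ι) :
    ((R - ∑ j ∈ Finset.range k, (TL p A ^ j) Y) χ).PosSemidef := by
  induction k generalizing χ with
  | zero => simpa using hR χ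
  | succ k ih =>
    have e : R - ∑ j ∈ Finset.range (k + 1), (TL p A ^ j) Y
        = (R - Y - TL p A R) + TL p A (R - ∑ j ∈ Finset.range k, (TL p A ^ j) Y) := by
      rw [Finset.sum_range_succ', map_sub, map_sum]
      simp only [pow_succ', Module.End.mul_apply, pow_zero, Module.End.one_apply]
      abel
    rw [e]
    exact (h χ).add (psd_TL hp A ih χ)

theorem geo_bound {p : ι → ι → ℝ} (hp : ∀ a b, 0 ≤ p a b)
    (A : ι → Matrix (Fin n) (Fin n) ℝ) {R Y : ι → Matrix (Fin n) (Fin n) ℝ}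
    {c lam : ℝ} (hc : 0 ≤ c) (hl : 0 ≤ lam)
    (h : ∀ χ, (lam • R χ - TL p A R χ).PosSemidef)
    (hY : ∀ χ, (c • R χ - Y χ).PosSemidef) (k : ℕ) (χ : ι) :
    (((c * lam ^ k) • R - (TL p A ^ k) Y) χ).PosSemidef := by
  induction k generalizing χ with
  | zero => simpa using hY χ
  | succ k ih =>
    have e : (c * lam ^ (k + 1)) • R - (TL p A ^ (k + 1)) Y
        = (c * lam ^ k) • (lam • R - TL p A R)
          + TL p A ((c * lam ^ k) • R - (TL p A ^ k) Y) := by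
      rw [map_sub, map_smul, pow_succ' (TL p A), Module.End.mul_apply, smul_sub, smul_smul]
      rw [show c * lam ^ (k + 1) = c * lam ^ k * lam by ring]
      abel
    rw [e]
    have hck : 0 ≤ c * lam ^ k := by positivity
    exact ((h χ).smul hck).add (psd_TL hp A ih χ)

/-- quadratic form -/
def qf (Z : Matrix (Fin n) (Fin n) ℝ) (x : Fin n → ℝ) : ℝ := x ⬝ᵥ (Z *ᵥ x)

theorem qf_nonneg {Z : Matrix (Fin n) (Fin n) ℝ} (h : Z.PosSemidef) (x : Fin n → ℝ) :
    0 ≤ qf Z x := by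
  simpa [qf] using h.dotProduct_mulVec_nonneg x

theorem psd_of_qf {Z : Matrix (Fin n) (Fin n) ℝ} (h : Z.IsHermitian)
    (h' : ∀ x, 0 ≤ qf Z x) : Z.PosSemidef :=
  PosSemidef.of_dotProduct_mulVec_nonneg h (by simpa [qf] using h')

theorem qf_sub (Z Z' : Matrix (Fin n) (Fin n) ℝ) (x : Fin n → ℝ) :
    qf (Z - Z') x = qf Z x - qf Z' x := by
  simp [qf, Matrix.sub_mulVec, dotProduct_sub]

theorem qf_smul (c : ℝ) (Z : Matrix (Fin n) (Fin n) ℝ) (x : Fin n → ℝ) :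
    qf (c • Z) x = c * qf Z x := by
  simp [qf, Matrix.smul_mulVec, dotProduct_smul]

theorem qf_sum {κ : Type} (s : Finset κ) (Z : κ → Matrix (Fin n) (Fin n) ℝ) (x : Fin n → ℝ) :
    qf (∑ i ∈ s, Z i) x = ∑ i ∈ s, qf (Z i) x := by
  simp [qf, Matrix.sum_mulVec, dotProduct_sum]

theorem qf_conj {a : ℕ} (Z : Matrix (Fin a) (Fin a) ℝ) (A : Matrix (Fin a) (Fin n) ℝ)
    (x : Fin n → ℝ) : qf (Aᵀ * Z * A) x = qf Z (A *ᵥ x) := by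
  simp only [qf, ← Matrix.mulVec_mulVec]
  rw [Matrix.dotProduct_mulVec, Matrix.vecMul_transpose]

theorem qf_trace (Z : Matrix (Fin n) (Fin n) ℝ) (x : Fin n → ℝ) :
    (Z * vecMulVec x x).trace = qf Z x := by
  rw [Matrix.mul_vecMulVec, Matrix.trace_vecMulVec, qf, dotProduct_comm]

theorem exists_eps {M N : Matrix (Fin n) (Fin n) ℝ} (hM : M.PosDef) (hN : N.IsHermitian) :
    ∃ e : ℝ, 0 < e ∧ (M - e • N).PosSemidef := by
  have hcM : Continuous (qf M) := by
    unfold qf; fun_prop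
  have hcN : Continuous (qf N) := by
    unfold qf; fun_prop
  have hcomp : IsCompact (Metric.sphere (0 : Fin n → ℝ) 1) := isCompact_sphere _ _
  obtain ⟨b, hb⟩ := (hcomp.image hcN).bddAbove
  have hb' : ∀ x ∈ Metric.sphere (0 : Fin n → ℝ) 1, qf N x ≤ b := fun x hx => hb ⟨x, hx, rfl⟩
  have key : ∃ e : ℝ, 0 < e ∧ ∀ x ∈ Metric.sphere (0 : Fin n → ℝ) 1, e * qf N x ≤ qf M x := by
    rcases (Metric.sphere (0 : Fin n → ℝ) 1).eq_empty_or_nonempty with h | h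
    · exact ⟨1, one_pos, by simp [h]⟩
    · obtain ⟨x0, hx0, hmin⟩ := hcomp.exists_isMinOn h hcM.continuousOn
      have hx00 : x0 ≠ 0 := by
        rintro rfl
        simp at hx0
      have hpos : 0 < qf M x0 := by simpa [qf] using hM.dotProduct_mulVec_pos hx00
      refine ⟨qf M x0 / (|b| + 1), by positivity, fun x hx => ?_⟩
      have h1 : qf M x0 ≤ qf M x := hmin hx
      have h2 := hb' x hx
      have h3 : qf N x ≤ |b| + 1 := by linarith [le_abs_self b]
      calc qf M x0 / (|b| + 1) * qf N x ≤ qf M x0 / (|b| + 1) * (|b| + 1) := by gcongr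
        _ = qf M x0 := by field_simp
        _ ≤ _ := h1
  obtain ⟨e, he, hk⟩ := key
  refine ⟨e, he, psd_of_qf ?_ fun x => ?_⟩
  · refine hM.isHermitian.sub ?_
    rw [Matrix.IsHermitian, conjTranspose_smul, hN.eq, star_trivial]
  · rw [qf_sub, qf_smul]
    by_cases hx : x = 0
    · simp [hx, qf]
    · have hn : ‖x‖ ≠ 0 := by simpa using hx
      have hs : ∀ (Z : Matrix (Fin n) (Fin n) ℝ), qf Z x = ‖x‖ ^ 2 * qf Z (‖x‖⁻¹ • x) := by
        intro Z
        simp only [qf, Matrix.mulVec_smul, dotProduct_smul, smul_dotProduct, smul_eq_mul]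
        field_simp
      have := hk (‖x‖⁻¹ • x) (by simp [norm_smul, hn])
      rw [hs M, hs N]
      nlinarith [sq_nonneg ‖x‖, mul_le_mul_of_nonneg_left this (sq_nonneg ‖x‖)]

theorem exists_eps_all {M N : ι → Matrix (Fin n) (Fin n) ℝ} (hM : ∀ χ, (M χ).PosDef)
    (hN : ∀ χ, (N χ).PosSemidef) (b : ℝ) (hb : 0 < b) :
    ∃ e : ℝ, 0 < e ∧ e ≤ b ∧ ∀ χ, (M χ - e • N χ).PosSemidef := by
  choose e he h using fun χ => exists_eps (hM χ) (hN χ).isHermitian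
  have : ∃ e0 : ℝ, 0 < e0 ∧ ∀ χ, e0 ≤ e χ := by
    rcases isEmpty_or_nonempty ι with h | h
    · exact ⟨1, one_pos, fun χ => (h.false χ).elim⟩
    · obtain ⟨χ0, h0⟩ := Finite.exists_min e
      exact ⟨e χ0, he _, h0⟩
  obtain ⟨e0, he0, hle⟩ := this
  refine ⟨min e0 b, lt_min he0 hb, min_le_right _ _, fun χ => ?_⟩
  have : M χ - min e0 b • N χ = (M χ - e χ • N χ) + (e χ - min e0 b) • N χ := by
    rw [sub_smul]; abel
  rw [this]
  exact (h χ).add ((hN χ).smul (sub_nonneg.2 ((min_le_left _ _).trans (hle χ))))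

end Det

section ProbGen
variable {ι : Type} [Fintype ι] {n : ℕ}

theorem adjoint_id {a : ℕ} (p : ι → ι → ℝ) (B : ι → Matrix (Fin a) (Fin n) ℝ)
    (Z : ι → Matrix (Fin a) (Fin a) ℝ) (Y : ι → Matrix (Fin n) (Fin n) ℝ) :
    ∑ χ, ((∑ χ', p χ χ' • ((B χ')ᵀ * Z χ' * B χ')) * Y χ).trace
      = ∑ χ', (Z χ' * (B χ' * dsumL p Y χ' * (B χ')ᵀ)).trace := by
  have h1 : ∀ χ, ((∑ χ', p χ χ' • ((B χ')ᵀ * Z χ' * B χ')) * Y χ).trace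
      = ∑ χ', p χ χ' * (Z χ' * (B χ' * Y χ * (B χ')ᵀ)).trace := by
    intro χ
    rw [Finset.sum_mul, Matrix.trace_sum]
    refine Finset.sum_congr rfl fun χ' _ => ?_
    rw [Matrix.smul_mul, Matrix.trace_smul, smul_eq_mul, Matrix.mul_assoc, Matrix.mul_assoc,
      Matrix.trace_mul_comm, Matrix.mul_assoc, Matrix.mul_assoc]
  have h2 : ∀ χ', (Z χ' * (B χ' * dsumL p Y χ' * (B χ')ᵀ)).trace
      = ∑ χ, p χ χ' * (Z χ' * (B χ' * Y χ * (B χ')ᵀ)).trace := by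
    intro χ'
    simp only [dsumL, LinearMap.coe_mk, AddHom.coe_mk]
    rw [Matrix.mul_sum, Matrix.sum_mul, Matrix.mul_sum, Matrix.trace_sum]
    refine Finset.sum_congr rfl fun χ _ => ?_
    simp
  simp only [h1, h2]
  exact Finset.sum_comm

theorem ofReal_mix {a : ℕ} {p : ι → ι → ℝ} (hp : ∀ a b, 0 ≤ p a b)
    (B : ι → Matrix (Fin a) (Fin n) ℝ)
    {Z : ι → Matrix (Fin a) (Fin a) ℝ} (hZ : ∀ χ, (Z χ).PosSemidef) (χ : ι) (x : Fin n → ℝ) :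
    ∑ χ', ENNReal.ofReal (p χ χ') * ENNReal.ofReal (qf (Z χ') (B χ' *ᵥ x))
      = ENNReal.ofReal (qf (∑ χ', p χ χ' • ((B χ')ᵀ * Z χ' * B χ')) x) := by
  rw [qf_sum, ENNReal.ofReal_sum_of_nonneg]
  · refine Finset.sum_congr rfl fun χ' _ => ?_
    rw [qf_smul, qf_conj, ENNReal.ofReal_mul (hp _ _)]
  · intro χ' _
    rw [qf_smul, qf_conj]
    exact mul_nonneg (hp _ _) (qf_nonneg (hZ _) _)

theorem psd_mix {a : ℕ} {p : ι → ι → ℝ} (hp : ∀ a b, 0 ≤ p a b)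
    (B : ι → Matrix (Fin a) (Fin n) ℝ)
    {Z : ι → Matrix (Fin a) (Fin a) ℝ} (hZ : ∀ χ, (Z χ).PosSemidef) (χ : ι) :
    (∑ χ', p χ χ' • ((B χ')ᵀ * Z χ' * B χ')).PosSemidef := by
  refine posSemidef_sum _ fun χ' _ => PosSemidef.smul ?_ (hp χ χ')
  have := psd_conj (hZ χ') (B χ')ᵀ
  rwa [Matrix.transpose_transpose] at this

theorem sqE_eq (v : Fin n → ℝ) : sqE v = ENNReal.ofReal (qf 1 v) := by
  simp [sqE, qf, dotProduct, sq]

theorem moment [DecidableEq ι] {Ω : Type} [MeasurableSpace Ω] (μ : Measure Ω) [IsProbabilityMeasure μ]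
    {p : ι → ι → ℝ} (hp : ∀ a b, 0 ≤ p a b) (A : ι → Matrix (Fin n) (Fin n) ℝ)
    (θ : ℕ → Ω → ι) (x : ℕ → Ω → Fin n → ℝ)
    (hMK : ∀ (k : ℕ) (Φ : ι → (Fin n → ℝ) → ENNReal),
      ∫⁻ ω, Φ (θ (k + 1) ω) (x (k + 1) ω) ∂μ
        = ∫⁻ ω, ∑ χ', ENNReal.ofReal (p (θ k ω) χ') * Φ χ' (x (k + 1) ω) ∂μ)
    (hx : ∀ k ω, x (k + 2) ω = A (θ (k + 1) ω) *ᵥ x (k + 1) ω)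
    (χ0 : ι) (y0 : Fin n → ℝ) (h0 : ∀ᵐ ω ∂μ, θ 0 ω = χ0 ∧ x 1 ω = y0)
    (k : ℕ) (Z : ι → Matrix (Fin n) (Fin n) ℝ) (hZ : ∀ χ, (Z χ).PosSemidef) :
    ∫⁻ ω, ENNReal.ofReal (qf (Z (θ k ω)) (x (k + 1) ω)) ∂μ
      = ENNReal.ofReal (∑ χ, (Z χ * (TL p A ^ k) (Pi.single χ0 (vecMulVec y0 y0)) χ).trace) := by
  induction k generalizing Z with
  | zero =>
    have h1 : ∫⁻ ω, ENNReal.ofReal (qf (Z (θ 0 ω)) (x (0 + 1) ω)) ∂μ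
        = ∫⁻ ω, ENNReal.ofReal (qf (Z χ0) y0) ∂μ := by
      refine lintegral_congr_ae ?_
      filter_upwards [h0] with ω hω
      rw [hω.1, zero_add, hω.2]
    rw [h1, lintegral_const, measure_univ, mul_one]
    congr 1
    rw [Finset.sum_eq_single χ0]
    · simp [qf_trace]
    · intro χ _ hχ
      simp [Pi.single_eq_of_ne hχ]
    · simp
  | succ k ih =>
    have h1 : ∫⁻ ω, ENNReal.ofReal (qf (Z (θ (k + 1) ω)) (x (k + 1 + 1) ω)) ∂μ
        = ∫⁻ ω, ENNReal.ofReal (qf (∑ χ', p (θ k ω) χ' • ((A χ')ᵀ * Z χ' * A χ'))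
            (x (k + 1) ω)) ∂μ := by
      have := hMK k (fun χ v => ENNReal.ofReal (qf (Z χ) (A χ *ᵥ v)))
      simp only [hx]
      rw [this]
      simp only [ofReal_mix hp A hZ]
    rw [h1, ih (fun χ => ∑ χ', p χ χ' • ((A χ')ᵀ * Z χ' * A χ')) (psd_mix hp A hZ)]
    rw [adjoint_id, pow_succ']
    rfl

theorem moment_out [DecidableEq ι] {Ω : Type} [MeasurableSpace Ω] (μ : Measure Ω) [IsProbabilityMeasure μ]
    {p : ι → ι → ℝ} (hp : ∀ a b, 0 ≤ p a b) (A : ι → Matrix (Fin n) (Fin n) ℝ)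
    {l : ℕ} (C : ι → Matrix (Fin l) (Fin n) ℝ)
    (θ : ℕ → Ω → ι) (x : ℕ → Ω → Fin n → ℝ)
    (hMK : ∀ (k : ℕ) (Φ : ι → (Fin n → ℝ) → ENNReal),
      ∫⁻ ω, Φ (θ (k + 1) ω) (x (k + 1) ω) ∂μ
        = ∫⁻ ω, ∑ χ', ENNReal.ofReal (p (θ k ω) χ') * Φ χ' (x (k + 1) ω) ∂μ)
    (hx : ∀ k ω, x (k + 2) ω = A (θ (k + 1) ω) *ᵥ x (k + 1) ω)
    (χ0 : ι) (y0 : Fin n → ℝ) (h0 : ∀ᵐ ω ∂μ, θ 0 ω = χ0 ∧ x 1 ω = y0)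
    (k : ℕ) :
    ∫⁻ ω, sqE (C (θ (k + 1) ω) *ᵥ (x (k + 1) ω)) ∂μ
      = ENNReal.ofReal (costL p C ((TL p A ^ k) (Pi.single χ0 (vecMulVec y0 y0)))) := by
  have := hMK k (fun χ v => sqE (C χ *ᵥ v))
  rw [this]
  simp only [sqE_eq, ofReal_mix (Z := fun _ => 1) hp C (fun _ => PosSemidef.one)]
  rw [moment μ hp A θ x hMK hx χ0 y0 h0 k (fun χ => ∑ χ', p χ χ' • ((C χ')ᵀ * 1 * C χ'))
    (psd_mix hp C (Z := fun _ => 1) (fun _ => PosSemidef.one))]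
  rw [adjoint_id p C (fun _ => 1)]
  simp [costL]

end ProbGen

section Chain
variable {Ω : Type} {NN MM T : ℕ} [NeZero T]

/-- One step of the extended process. -/
def stepX (f : Fin MM → Bool) (χ : XT NN MM T) (a : Fin NN) (b : Fin MM) : XT NN MM T :=
  if f b = true then (a, b, a, 0) else (a, b, χ.2.2.1, χ.2.2.2 + 1)

theorem intToFin_succ (a : ℤ) : intToFin T (a + 1) = intToFin T a + 1 := by
  have hT : 0 < (T : ℤ) := by
    exact_mod_cast Nat.pos_of_ne_zero (NeZero.ne T)
  apply Fin.ext
  rw [Fin.val_add, Fin.val_one']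
  simp only [intToFin]
  zify
  rw [Int.toNat_of_nonneg (Int.emod_nonneg _ hT.ne'),
    Int.toNat_of_nonneg (Int.emod_nonneg _ hT.ne')]
  simp

theorem intToFin_zero : intToFin T 0 = 0 := by
  apply Fin.ext
  simp [intToFin]

theorem rbar_succ (r : ℕ → Ω → Fin NN) (s : ℕ → Ω → Fin MM) (f : Fin MM → Bool) (τ₀ : ℤ)
    (σ₀ : Fin NN) (k : ℕ) (ω : Ω) :
    rbarProc (T := T) r s f τ₀ σ₀ (k + 1) ω
      = stepX f (rbarProc r s f τ₀ σ₀ k ω) (r (k + 1) ω) (s (k + 1) ω) := by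
  unfold stepX
  by_cases hf : f (s (k + 1) ω) = true
  · have hex : ∃ j ≤ k + 1, f (s j ω) = true := ⟨k + 1, le_rfl, hf⟩
    rw [if_pos hf]
    simp only [rbarProc, sigmaProc, rhoProc, tauZ, if_pos hex, Nat.findGreatest_succ, if_pos hf]
    rw [sub_self, intToFin_zero]
  · rw [if_neg hf]
    have hiff : (∃ j ≤ k + 1, f (s j ω) = true) ↔ ∃ j ≤ k, f (s j ω) = true := by
      constructor
      · rintro ⟨j, hj, h⟩
        refine ⟨j, ?_, h⟩
        rcases Nat.lt_or_ge k j with h' | h'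
        · have : j = k + 1 := by omega
          subst this
          exact absurd h hf
        · exact h'
      · rintro ⟨j, hj, h⟩
        exact ⟨j, by omega, h⟩
    simp only [rbarProc, sigmaProc, rhoProc, tauZ, hiff, Nat.findGreatest_succ, if_neg hf]
    rw [← intToFin_succ]
    push_cast
    rw [show ∀ a b : ℤ, a + 1 - b = a - b + 1 from fun a b => by ring]

theorem rbar_zero (r : ℕ → Ω → Fin NN) (s : ℕ → Ω → Fin MM) (f : Fin MM → Bool) (τ₀ : ℤ)
    (σ₀ : Fin NN) (ω : Ω) :
    rbarProc (T := T) r s f τ₀ σ₀ 0 ω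
      = if f (s 0 ω) = true then (r 0 ω, s 0 ω, r 0 ω, 0)
        else (r 0 ω, s 0 ω, σ₀, intToFin T (-τ₀)) := by
  by_cases hf : f (s 0 ω) = true
  · simp [rbarProc, sigmaProc, rhoProc, tauZ, hf, intToFin_zero]
  · simp [rbarProc, sigmaProc, rhoProc, tauZ, hf]

theorem rbar_inX (r : ℕ → Ω → Fin NN) (s : ℕ → Ω → Fin MM) (f : Fin MM → Bool) (τ₀ : ℤ)
    (σ₀ : Fin NN) (k : ℕ) (ω : Ω) : inX f (rbarProc (T := T) r s f τ₀ σ₀ k ω) := by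
  cases k with
  | zero =>
    rw [rbar_zero]
    split_ifs with h <;> simp [inX, h]
  | succ k =>
    rw [rbar_succ, stepX]
    split_ifs with h <;> simp [inX, h]

theorem rbar_agree (r : ℕ → Ω → Fin NN) (s : ℕ → Ω → Fin MM) (f : Fin MM → Bool) (τ₀ : ℤ)
    (σ₀ : Fin NN) (k : ℕ) (ω ω' : Ω) (h : ∀ l ≤ k, r l ω = r l ω' ∧ s l ω = s l ω') :
    rbarProc (T := T) r s f τ₀ σ₀ k ω = rbarProc r s f τ₀ σ₀ k ω' := by
  induction k with
  | zero =>
    rw [rbar_zero, rbar_zero, (h 0 le_rfl).1, (h 0 le_rfl).2]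
  | succ k ih =>
    rw [rbar_succ, rbar_succ, ih (fun l hl => h l (by omega)), (h _ le_rfl).1, (h _ le_rfl).2]

theorem traj_agree {n q : ℕ} (r : ℕ → Ω → Fin NN) (s : ℕ → Ω → Fin MM) (f : Fin MM → Bool)
    (τ₀ : ℤ) (σ₀ : Fin NN) (A : XT NN MM T → Matrix (Fin n) (Fin n) ℝ)
    (E : XT NN MM T → Matrix (Fin n) (Fin q) ℝ) (w : ℕ → Fin q → ℝ) (x0 : Fin n → ℝ)
    (k : ℕ) (ω ω' : Ω) (h : ∀ l < k, r l ω = r l ω' ∧ s l ω = s l ω') :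
    traj A E (rbarProc r s f τ₀ σ₀) (fun j _ => w j) x0 k ω
      = traj A E (rbarProc r s f τ₀ σ₀) (fun j _ => w j) x0 k ω' := by
  induction k with
  | zero => rfl
  | succ k ih =>
    simp only [traj]
    rw [ih (fun l hl => h l (by omega)),
      rbar_agree r s f τ₀ σ₀ k ω ω' (fun l hl => h l (by omega))]

theorem sum_step (P : Matrix (Fin NN) (Fin NN) ℝ) (Q : Matrix (Fin MM) (Fin MM) ℝ)
    (f : Fin MM → Bool) (χ : XT NN MM T) (Ψ : XT NN MM T → ENNReal) :
    ∑ a, ∑ b, ENNReal.ofReal (P χ.1 a * Q χ.2.1 b) * Ψ (stepX f χ a b)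
      = ∑ χ', ENNReal.ofReal (pbar P Q f χ χ') * Ψ χ' := by
  rw [Fintype.sum_prod_type]
  refine Finset.sum_congr rfl fun a _ => ?_
  rw [Fintype.sum_prod_type]
  refine Finset.sum_congr rfl fun b _ => ?_
  rw [Finset.sum_eq_single (stepX f χ a b).2.2]
  · by_cases h : f b = true <;> simp [stepX, pbar, h]
  · rintro ⟨g, d⟩ _ hne
    by_cases h : f b = true
    · have : ¬ (a = g ∧ d = 0) := by
        rintro ⟨rfl, rfl⟩
        simp [stepX, h] at hne
      simp [pbar, h, this]
    · have : ¬ (g = χ.2.2.1 ∧ d = χ.2.2.2 + 1) := by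
        rintro ⟨rfl, rfl⟩
        simp [stepX, h] at hne
      simp [pbar, h, this]
  · simp

variable [MeasurableSpace Ω] (μ : Measure Ω) [IsProbabilityMeasure μ]

/-- history of the pair of chains up to time `k` -/
def hist (r : ℕ → Ω → Fin NN) (s : ℕ → Ω → Fin MM) (k : ℕ) (ω : Ω) :
    (Fin (k + 1) → Fin NN) × (Fin (k + 1) → Fin MM) :=
  (fun l => r l ω, fun l => s l ω)

theorem markov_meas {S : Type} {X : ℕ → Ω → S} {P : S → S → ℝ} (hP : ∀ i j, 0 ≤ P i j)
    (h : IsMarkovChain μ X P) (k : ℕ) (j : S) (i : Fin (k + 1) → S) :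
    μ {ω | X (k + 1) ω = j ∧ ∀ l : Fin (k + 1), X l ω = i l}
      = ENNReal.ofReal (P (i (Fin.last k)) j) * μ {ω | ∀ l : Fin (k + 1), X l ω = i l} := by
  have key := h k j (fun l => if hl : l < k + 1 then i ⟨l, hl⟩ else j)
  have e : ∀ ω, (∀ l ≤ k, X l ω = (fun l => if hl : l < k + 1 then i ⟨l, hl⟩ else j) l)
      ↔ ∀ l : Fin (k + 1), X l ω = i l := by
    intro ω
    constructor
    · intro H l
      have := H l (by omega)
      simp only [l.2, dif_pos] at this
      exact this
    · intro H l hl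
      have := H ⟨l, by omega⟩
      simp only [show l < k + 1 by omega, dif_pos]
      exact this
  simp only [e] at key
  rw [← ENNReal.ofReal_toReal (measure_ne_top μ {ω | X (k + 1) ω = j ∧ _}), key,
    ENNReal.ofReal_mul]
  · rw [ENNReal.ofReal_toReal (measure_ne_top _ _)]
    simp [Fin.last]
  · exact hP _ _

theorem joint_meas {P : Matrix (Fin NN) (Fin NN) ℝ} {Q : Matrix (Fin MM) (Fin MM) ℝ}
    (hP : ∀ i j, 0 ≤ P i j) (hQ : ∀ i j, 0 ≤ Q i j)
    (r : ℕ → Ω → Fin NN) (s : ℕ → Ω → Fin MM)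
    (hr : IsMarkovChain μ r fun i j => P i j) (hs : IsMarkovChain μ s fun i j => Q i j)
    (hind : IndepFun (fun ω l => r l ω) (fun ω l => s l ω) μ) (k : ℕ)
    (h : (Fin (k + 1) → Fin NN) × (Fin (k + 1) → Fin MM)) (a : Fin NN) (b : Fin MM) :
    μ {ω | hist r s k ω = h ∧ r (k + 1) ω = a ∧ s (k + 1) ω = b}
      = ENNReal.ofReal (P (h.1 (Fin.last k)) a * Q (h.2 (Fin.last k)) b)
          * μ {ω | hist r s k ω = h} := by
  rw [indepFun_iff_measure_inter_preimage_eq_mul] at hind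
  have m1 : ∀ {L : ℕ} (g : Fin (k + 1) → Fin L),
      MeasurableSet {u : ℕ → Fin L | ∀ l : Fin (k + 1), u l = g l} := by
    intro L g
    have : {u : ℕ → Fin L | ∀ l : Fin (k + 1), u l = g l}
        = ⋂ l : Fin (k + 1), (fun u : ℕ → Fin L => u l) ⁻¹' {g l} := by
      ext u; simp
    rw [this]
    exact MeasurableSet.iInter fun l => measurable_pi_apply _ (measurableSet_singleton _)
  have m2 : ∀ {L : ℕ} (c : Fin L) (g : Fin (k + 1) → Fin L),
      MeasurableSet {u : ℕ → Fin L | u (k + 1) = c ∧ ∀ l : Fin (k + 1), u l = g l} := by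
    intro L c g
    have : MeasurableSet {u : ℕ → Fin L | u (k + 1) = c} :=
      measurableSet_eq_fun (measurable_pi_apply (k + 1)) measurable_const
    exact this.inter (m1 g)
  have e1 := hind _ _ (m1 h.1) (m1 h.2)
  have e2 := hind _ _ (m2 a h.1) (m2 b h.2)
  have r1 := markov_meas μ (fun i j => hP i j) hr k a h.1
  have r2 := markov_meas μ (fun i j => hQ i j) hs k b h.2
  have s1 : {ω | hist r s k ω = h}
      = (fun ω l => r l ω) ⁻¹' {u : ℕ → Fin NN | ∀ l : Fin (k + 1), u l = h.1 l}
        ∩ (fun ω l => s l ω) ⁻¹' {u : ℕ → Fin MM | ∀ l : Fin (k + 1), u l = h.2 l} := by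
    ext ω
    simp [hist, Prod.ext_iff, funext_iff]
  have s2 : {ω | hist r s k ω = h ∧ r (k + 1) ω = a ∧ s (k + 1) ω = b}
      = (fun ω l => r l ω) ⁻¹' {u : ℕ → Fin NN | u (k + 1) = a ∧ ∀ l : Fin (k + 1), u l = h.1 l}
        ∩ (fun ω l => s l ω) ⁻¹'
          {u : ℕ → Fin MM | u (k + 1) = b ∧ ∀ l : Fin (k + 1), u l = h.2 l} := by
    ext ω
    simp [hist, Prod.ext_iff, funext_iff]
    tauto
  rw [s1, s2, e1, e2]
  simp only [Set.preimage_ofPred_eq]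
  rw [r1, r2, ENNReal.ofReal_mul (hP _ _)]
  ring

theorem lint_fin {S : Type} [Fintype S] [MeasurableSpace S] [MeasurableSingletonClass S]
    {Y : Ω → S} (hY : Measurable Y) (g : S → ENNReal) :
    ∫⁻ ω, g (Y ω) ∂μ = ∑ y, g y * μ {ω | Y ω = y} := by
  rw [← lintegral_map (measurable_of_countable g) hY, lintegral_fintype]
  refine Finset.sum_congr rfl fun y _ => ?_
  rw [Measure.map_apply hY (measurableSet_singleton y)]
  rfl

theorem markov_lint {P : Matrix (Fin NN) (Fin NN) ℝ} {Q : Matrix (Fin MM) (Fin MM) ℝ}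
    (hP : ∀ i j, 0 ≤ P i j) (hQ : ∀ i j, 0 ≤ Q i j)
    (r : ℕ → Ω → Fin NN) (s : ℕ → Ω → Fin MM)
    (mr : ∀ k, Measurable (r k)) (ms : ∀ k, Measurable (s k))
    (hr : IsMarkovChain μ r fun i j => P i j) (hs : IsMarkovChain μ s fun i j => Q i j)
    (hind : IndepFun (fun ω l => r l ω) (fun ω l => s l ω) μ) (k : ℕ)
    (g : (Fin (k + 1) → Fin NN) × (Fin (k + 1) → Fin MM) → Fin NN → Fin MM → ENNReal) :
    ∫⁻ ω, g (hist r s k ω) (r (k + 1) ω) (s (k + 1) ω) ∂μ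
      = ∫⁻ ω, ∑ a, ∑ b, ENNReal.ofReal (P (r k ω) a * Q (s k ω) b) * g (hist r s k ω) a b ∂μ := by
  have mh : Measurable (hist r s k) := by
    have h1 : Measurable fun ω => fun l : Fin (k + 1) => r l ω :=
      measurable_pi_lambda _ fun l => mr l
    have h2 : Measurable fun ω => fun l : Fin (k + 1) => s l ω :=
      measurable_pi_lambda _ fun l => ms l
    exact h1.prodMk h2
  have mY : Measurable fun ω => (hist r s k ω, r (k + 1) ω, s (k + 1) ω) :=
    mh.prodMk ((mr _).prodMk (ms _))
  have l1 := lint_fin μ mY (fun y => g y.1 y.2.1 y.2.2)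
  have l2 := lint_fin μ mh (fun h => ∑ a, ∑ b,
    ENNReal.ofReal (P (h.1 (Fin.last k)) a * Q (h.2 (Fin.last k)) b) * g h a b)
  simp only at l1
  rw [l1]
  refine Eq.trans ?_ l2.symm
  rw [Fintype.sum_prod_type]
  refine Finset.sum_congr rfl fun h _ => ?_
  rw [Fintype.sum_prod_type, Finset.sum_mul]
  refine Finset.sum_congr rfl fun a _ => ?_
  rw [Finset.sum_mul]
  refine Finset.sum_congr rfl fun b _ => ?_
  simp only [Prod.mk.injEq]
  rw [joint_meas μ hP hQ r s hr hs hind]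
  ring

theorem rbar_MK {P : Matrix (Fin NN) (Fin NN) ℝ} {Q : Matrix (Fin MM) (Fin MM) ℝ}
    (hP : ∀ i j, 0 ≤ P i j) (hQ : ∀ i j, 0 ≤ Q i j)
    (r : ℕ → Ω → Fin NN) (s : ℕ → Ω → Fin MM)
    (mr : ∀ k, Measurable (r k)) (ms : ∀ k, Measurable (s k))
    (hr : IsMarkovChain μ r fun i j => P i j) (hs : IsMarkovChain μ s fun i j => Q i j)
    (hind : IndepFun (fun ω l => r l ω) (fun ω l => s l ω) μ)
    {n q : ℕ} (f : Fin MM → Bool)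
    (τ₀ : ℤ) (σ₀ : Fin NN) (A : XT NN MM T → Matrix (Fin n) (Fin n) ℝ)
    (E : XT NN MM T → Matrix (Fin n) (Fin q) ℝ) (w : ℕ → Fin q → ℝ) (x0 : Fin n → ℝ)
    (k : ℕ) (Φ : XT NN MM T → (Fin n → ℝ) → ENNReal) :
    ∫⁻ ω, Φ (rbarProc r s f τ₀ σ₀ (k + 1) ω)
        (traj A E (rbarProc r s f τ₀ σ₀) (fun j _ => w j) x0 (k + 1) ω) ∂μ
      = ∫⁻ ω, ∑ χ', ENNReal.ofReal (pbar P Q f (rbarProc r s f τ₀ σ₀ k ω) χ')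
          * Φ χ' (traj A E (rbarProc r s f τ₀ σ₀) (fun j _ => w j) x0 (k + 1) ω) ∂μ := by
  have agree : ∀ ω ω', hist r s k ω = hist r s k ω' →
      ∀ l < k + 1, r l ω = r l ω' ∧ s l ω = s l ω' := by
    intro ω ω' h l hl
    have h1 := congrFun (congrArg Prod.fst h) ⟨l, hl⟩
    have h2 := congrFun (congrArg Prod.snd h) ⟨l, hl⟩
    exact ⟨h1, h2⟩
  have f1 : Function.FactorsThrough
      (fun ω => (rbarProc (T := T) r s f τ₀ σ₀ k ω,
        traj A E (rbarProc r s f τ₀ σ₀) (fun j _ => w j) x0 (k + 1) ω)) (hist r s k) := by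
    intro ω ω' h
    have h' := agree ω ω' h
    exact Prod.ext (rbar_agree r s f τ₀ σ₀ k ω ω' (fun l hl => h' l (by omega)))
      (traj_agree r s f τ₀ σ₀ A E w x0 (k + 1) ω ω' h')
  obtain ⟨ω0⟩ : Nonempty Ω := nonempty_of_isProbabilityMeasure μ
  let u := Function.extend (hist r s k) (fun ω => (rbarProc (T := T) r s f τ₀ σ₀ k ω,
        traj A E (rbarProc r s f τ₀ σ₀) (fun j _ => w j) x0 (k + 1) ω))
        (fun _ => (rbarProc (T := T) r s f τ₀ σ₀ k ω0, x0))
  have hu : ∀ ω, u (hist r s k ω) = (rbarProc (T := T) r s f τ₀ σ₀ k ω,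
        traj A E (rbarProc r s f τ₀ σ₀) (fun j _ => w j) x0 (k + 1) ω) :=
    fun ω => f1.extend_apply _ ω
  have key := markov_lint μ hP hQ r s mr ms hr hs hind k
    (fun h a b => Φ (stepX f (u h).1 a b) (u h).2)
  simp only [hu] at key
  simp only [rbar_succ]
  rw [key]
  refine lintegral_congr fun ω => ?_
  exact sum_step P Q f (rbarProc r s f τ₀ σ₀ k ω) (fun χ' => Φ χ' _)

end Chain

section Final

theorem lmi_pd {a n : ℕ} {M : Matrix (Fin a) (Fin a) ℝ} {C : Matrix (Fin a) (Fin n) ℝ}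
    {G X : Matrix (Fin n) (Fin n) ℝ}
    (h : (Matrix.fromBlocks M (C * G) (C * G)ᵀ (G + Gᵀ - X)).PosDef) :
    (M - C * X * Cᵀ).PosDef := by
  have hinj : Function.Injective
      (Matrix.vecMul · (Matrix.fromCols (1 : Matrix (Fin a) (Fin a) ℝ) (-C))) := by
    intro u v huv
    simp only [Matrix.vecMul_fromCols] at huv
    funext i
    have := congrFun huv (Sum.inl i)
    simpa using this
  have h1 := h.mul_mul_conjTranspose_same hinj
  have e : Matrix.fromCols (1 : Matrix (Fin a) (Fin a) ℝ) (-C)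
      * Matrix.fromBlocks M (C * G) (C * G)ᵀ (G + Gᵀ - X)
      * (Matrix.fromCols (1 : Matrix (Fin a) (Fin a) ℝ) (-C))ᴴ = M - C * X * Cᵀ := by
    rw [conjTranspose_eq_transpose_of_trivial, Matrix.transpose_fromCols,
      Matrix.fromCols_mul_fromBlocks, Matrix.fromCols_mul_fromRows]
    simp only [Matrix.transpose_one, Matrix.transpose_neg, Matrix.transpose_mul, Matrix.mul_add,
      Matrix.add_mul, Matrix.mul_sub, Matrix.sub_mul, Matrix.neg_mul, Matrix.mul_neg,
      Matrix.one_mul, Matrix.mul_one, Matrix.mul_assoc]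
    abel
  rwa [e] at h1

theorem block_inl {a n : ℕ} {M : Matrix (Fin a) (Fin a) ℝ} {B : Matrix (Fin a) (Fin n) ℝ}
    {B' : Matrix (Fin n) (Fin a) ℝ} {X : Matrix (Fin n) (Fin n) ℝ}
    (h : (Matrix.fromBlocks M B B' X).PosDef) : M.PosDef :=
  h.submatrix (e := Sum.inl) Sum.inl_injective

theorem block_inr {a n : ℕ} {M : Matrix (Fin a) (Fin a) ℝ} {B : Matrix (Fin a) (Fin n) ℝ}
    {B' : Matrix (Fin n) (Fin a) ℝ} {X : Matrix (Fin n) (Fin n) ℝ}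
    (h : (Matrix.fromBlocks M B B' X).PosDef) : X.PosDef :=
  h.submatrix (e := Sum.inr) Sum.inr_injective

theorem unit_of_pd {n : ℕ} {G : Matrix (Fin n) (Fin n) ℝ} (h : (G + Gᵀ).PosDef) : IsUnit G := by
  rw [← Matrix.mulVec_injective_iff_isUnit]
  intro u v huv
  by_contra hne
  have hne' : u - v ≠ 0 := sub_ne_zero.2 hne
  have h0 : G *ᵥ (u - v) = 0 := by
    rw [Matrix.mulVec_sub, sub_eq_zero]
    exact huv
  have := h.dotProduct_mulVec_pos hne'
  rw [star_trivial, Matrix.add_mulVec, h0, zero_add, Matrix.dotProduct_mulVec,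
    Matrix.vecMul_transpose, h0] at this
  simp at this

theorem psd_rank_one {n : ℕ} (x : Fin n → ℝ) :
    ((∑ i, x i ^ 2) • (1 : Matrix (Fin n) (Fin n) ℝ) - vecMulVec x x).PosSemidef := by
  refine psd_of_qf ?_ fun u => ?_
  · rw [Matrix.IsHermitian, conjTranspose_eq_transpose_of_trivial]
    simp [Matrix.transpose_vecMulVec]
  · rw [qf_sub, qf_smul]
    have h1 : qf (vecMulVec x x) u = (∑ i, x i * u i) ^ 2 := by
      simp only [qf, Matrix.vecMulVec_mulVec]
      simp [dotProduct, sq, Finset.mul_sum, Finset.sum_mul, mul_comm, mul_left_comm]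
    have h2 : qf 1 u = ∑ i, u i ^ 2 := by
      simp [qf, dotProduct, sq]
    rw [h1, h2]
    exact sub_nonneg.2 (Finset.sum_mul_sq_le_sq_mul_sq _ _ _)

theorem conj_rank_one {a n : ℕ} (A : Matrix (Fin a) (Fin n) ℝ) (x : Fin n → ℝ) :
    A * vecMulVec x x * Aᵀ = vecMulVec (A *ᵥ x) (A *ᵥ x) := by
  rw [Matrix.mul_vecMulVec, Matrix.vecMulVec_mul, Matrix.vecMul_transpose]

section core
variable {ι : Type} [Fintype ι] {n : ℕ}

theorem core_mss [DecidableEq ι] {p : ι → ι → ℝ} (hp : ∀ a b, 0 ≤ p a b) (A R : ι → Matrix (Fin n) (Fin n) ℝ)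
    (hR : ∀ χ, (R χ).PosDef) (hT : ∀ χ, (R χ - TL p A R χ).PosDef) :
    ∃ c lam : ℝ, 1 ≤ c ∧ 0 ≤ lam ∧ lam < 1 ∧ ∀ (χ0 : ι) (x0 : Fin n → ℝ) (k : ℕ),
      ∑ χ, ((1 : Matrix (Fin n) (Fin n) ℝ)
          * (TL p A ^ k) (Pi.single χ0 (vecMulVec (A χ0 *ᵥ x0) (A χ0 *ᵥ x0))) χ).trace
        ≤ c * lam ^ (k + 1) * ∑ i, x0 i ^ 2 := by
  obtain ⟨e, he, he2, h1⟩ := exists_eps_all hT (fun χ => (hR χ).posSemidef) (1 / 2) (by norm_num)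
  obtain ⟨d, hd, -, h2⟩ := exists_eps_all hR
    (N := fun χ => A χ * 1 * (A χ)ᵀ) (fun χ => psd_conj PosSemidef.one (A χ)) 1 one_pos
  have htr : 0 ≤ ∑ χ, (R χ).trace := Finset.sum_nonneg fun χ _ => (hR χ).posSemidef.trace_nonneg
  refine ⟨1 + 2 * (d⁻¹ * ∑ χ, (R χ).trace), 1 - e, ?_, by linarith, by linarith, ?_⟩
  · have : 0 ≤ d⁻¹ * ∑ χ, (R χ).trace := by positivity
    linarith
  intro χ0 x0 k
  set N := ∑ i, x0 i ^ 2 with hN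
  have hN0 : 0 ≤ N := Finset.sum_nonneg fun i _ => sq_nonneg _
  have hlam : ∀ χ, ((1 - e) • R χ - TL p A R χ).PosSemidef := by
    intro χ
    have : (1 - e) • R χ - TL p A R χ = R χ - TL p A R χ - e • R χ := by
      rw [sub_smul, one_smul]; abel
    rw [this]
    exact h1 χ
  have hY : ∀ χ, ((N * d⁻¹) • R χ
      - (Pi.single χ0 (vecMulVec (A χ0 *ᵥ x0) (A χ0 *ᵥ x0)) :
        ι → Matrix (Fin n) (Fin n) ℝ) χ).PosSemidef := by
    intro χ
    have hNd : 0 ≤ N * d⁻¹ := by positivity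
    by_cases hχ : χ = χ0
    · subst hχ
      rw [Pi.single_eq_same, ← conj_rank_one]
      have : (N * d⁻¹) • R χ - A χ * vecMulVec x0 x0 * (A χ)ᵀ
          = (N * d⁻¹) • (R χ - d • (A χ * 1 * (A χ)ᵀ))
            + A χ * (N • 1 - vecMulVec x0 x0) * (A χ)ᵀ := by
        rw [smul_sub, smul_smul, mul_assoc N, inv_mul_cancel₀ hd.ne', mul_one N, Matrix.mul_sub,
          Matrix.sub_mul, Matrix.mul_smul, Matrix.smul_mul]
        abel
      rw [this]
      exact ((h2 χ).smul hNd).add (psd_conj (psd_rank_one x0) _)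
    · rw [Pi.single_eq_of_ne hχ, sub_zero]
      exact (hR χ).posSemidef.smul hNd
  have hg := geo_bound hp A (c := N * d⁻¹) (lam := 1 - e) (by positivity) (by linarith) hlam hY k
  have hle : ∀ χ, ((1 : Matrix (Fin n) (Fin n) ℝ)
          * (TL p A ^ k) (Pi.single χ0 (vecMulVec (A χ0 *ᵥ x0) (A χ0 *ᵥ x0))) χ).trace
        ≤ N * d⁻¹ * (1 - e) ^ k * (R χ).trace := by
    intro χ
    have := (hg χ).trace_nonneg
    rw [Pi.sub_apply, Pi.smul_apply, Matrix.trace_sub, Matrix.trace_smul, smul_eq_mul] at this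
    rw [Matrix.one_mul]
    linarith
  refine (Finset.sum_le_sum fun χ _ => hle χ).trans ?_
  rw [← Finset.mul_sum]
  have hl0 : 0 ≤ (1 - e) ^ k := pow_nonneg (by linarith) _
  set t := ∑ χ, (R χ).trace
  have hz : 0 ≤ N * d⁻¹ * (1 - e) ^ k * t := by positivity
  calc N * d⁻¹ * (1 - e) ^ k * t ≤ N * d⁻¹ * (1 - e) ^ k * t * (2 * (1 - e)) :=
        le_mul_of_one_le_right hz (by linarith)
    _ = (2 * (d⁻¹ * t)) * (1 - e) ^ (k + 1) * N := by ring
    _ ≤ (1 + 2 * (d⁻¹ * t)) * (1 - e) ^ (k + 1) * N := by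
        have : 0 ≤ (1 - e) ^ (k + 1) := pow_nonneg (by linarith) _
        gcongr
        linarith

theorem core_h2 [DecidableEq ι] {p : ι → ι → ℝ} (hp : ∀ a b, 0 ≤ p a b) (A R : ι → Matrix (Fin n) (Fin n) ℝ)
    {l q : ℕ} (C : ι → Matrix (Fin l) (Fin n) ℝ) (W : ι → Matrix (Fin l) (Fin l) ℝ)
    (E : ι → Matrix (Fin n) (Fin q) ℝ) (m : ι → ℝ) (hm : ∀ χ, 0 ≤ m χ)
    (hR : ∀ χ, (R χ).PosDef)
    (hT : ∀ χ, (R χ - m χ • (E χ * (E χ)ᵀ) - TL p A R χ).PosDef)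
    (hW : ∀ χ, (W χ - C χ * dsumL p R χ * (C χ)ᵀ).PosDef) (g : ℝ) (hg0 : 0 < g)
    (hg : ∑ χ, (W χ).trace < g) :
    ∑ i : Fin q, ∑ χ : ι, ENNReal.ofReal (m χ) * ∑' k : ℕ, ENNReal.ofReal (costL p C
        ((TL p A ^ k) (Pi.single χ (vecMulVec (E χ *ᵥ Pi.single i 1) (E χ *ᵥ Pi.single i 1)))))
      < ENNReal.ofReal g := by
  set Y : Fin q → ι → ι → Matrix (Fin n) (Fin n) ℝ := fun i χ =>
    Pi.single χ (vecMulVec (E χ *ᵥ Pi.single i 1) (E χ *ᵥ Pi.single i 1)) with hYdef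
  have hYpsd : ∀ i χ χ', (Y i χ χ').PosSemidef := by
    intro i χ χ'
    simp only [hYdef]
    by_cases h : χ' = χ
    · subst h
      rw [Pi.single_eq_same]
      simpa using posSemidef_vecMulVec_self_star (E χ' *ᵥ Pi.single i (1 : ℝ))
    · rw [Pi.single_eq_of_ne h]
      exact PosSemidef.zero
  set Yt : ι → Matrix (Fin n) (Fin n) ℝ := fun χ => m χ • (E χ * (E χ)ᵀ) with hYt
  have hYtpsd : ∀ χ, (Yt χ).PosSemidef := fun χ => by
    have := psd_conj (PosSemidef.one (n := Fin q) (R := ℝ)) (E χ)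
    rw [Matrix.mul_one] at this
    exact this.smul (hm χ)
  have hsum : Yt = ∑ i, ∑ χ, m χ • Y i χ := by
    funext χ
    have hc : ∀ i, (∑ χ', m χ' • Y i χ') χ
        = m χ • vecMulVec (E χ *ᵥ Pi.single i 1) (E χ *ᵥ Pi.single i 1) := by
      intro i
      rw [Finset.sum_apply, Finset.sum_eq_single χ]
      · simp [hYdef]
      · intro χ' _ hne
        simp [hYdef, Pi.single_eq_of_ne (Ne.symm hne)]
      · simp
    rw [Finset.sum_apply]
    simp only [hc, hYt]
    rw [← Finset.smul_sum]
    congr 1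
    ext a b
    simp [Matrix.mul_apply, Matrix.sum_apply, vecMulVec_apply]
  have hk : ∀ k, ∑ i, ∑ χ, ENNReal.ofReal (m χ) * ENNReal.ofReal (costL p C ((TL p A ^ k) (Y i χ)))
      = ENNReal.ofReal (costL p C ((TL p A ^ k) Yt)) := by
    intro k
    have hnn : ∀ i χ, 0 ≤ m χ * costL p C ((TL p A ^ k) (Y i χ)) := fun i χ =>
      mul_nonneg (hm χ) (cost_nonneg hp C (psd_TL_pow hp A (hYpsd i χ) k))
    rw [hsum]
    simp only [map_sum, map_smul, smul_eq_mul]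
    rw [ENNReal.ofReal_sum_of_nonneg fun i _ => Finset.sum_nonneg fun χ _ => hnn i χ]
    refine Finset.sum_congr rfl fun i _ => ?_
    rw [ENNReal.ofReal_sum_of_nonneg fun χ _ => hnn i χ]
    refine Finset.sum_congr rfl fun χ _ => ?_
    rw [ENNReal.ofReal_mul (hm χ)]
  have hswap : ∑ i : Fin q, ∑ χ : ι, ENNReal.ofReal (m χ) * ∑' k : ℕ,
        ENNReal.ofReal (costL p C ((TL p A ^ k) (Y i χ)))
      = ∑' k : ℕ, ENNReal.ofReal (costL p C ((TL p A ^ k) Yt)) := by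
    simp only [← hk, ← ENNReal.tsum_mul_left]
    rw [Summable.tsum_finsetSum fun _ _ => ENNReal.summable]
    refine Finset.sum_congr rfl fun i _ => ?_
    rw [Summable.tsum_finsetSum fun _ _ => ENNReal.summable]
  rw [hswap]
  have hcost : costL p C R ≤ ∑ χ, (W χ).trace := by
    refine Finset.sum_le_sum fun χ _ => ?_
    have := (hW χ).posSemidef.trace_nonneg
    rw [Matrix.trace_sub] at this
    linarith
  refine lt_of_le_of_lt (b := ENNReal.ofReal (∑ χ, (W χ).trace)) ?_
    ((ENNReal.ofReal_lt_ofReal_iff hg0).2 hg)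
  refine ENNReal.tsum_le_of_sum_range_le fun K => ?_
  rw [← ENNReal.ofReal_sum_of_nonneg fun k _ => cost_nonneg hp C (psd_TL_pow hp A hYtpsd k)]
  refine ENNReal.ofReal_le_ofReal (le_trans ?_ hcost)
  rw [← map_sum]
  have := cost_nonneg hp C (partial_sum_le hp A (fun χ => (hR χ).posSemidef)
    (Y := Yt) (fun χ => (hT χ).posSemidef) K)
  rw [map_sub] at this
  linarith

end core

section lift
variable {NN MM T : ℕ} [NeZero T]

/-- the state space `𝔛` as a type -/
abbrev XS (NN MM T : ℕ) [NeZero T] (f : Fin MM → Bool) : Type := {χ : XT NN MM T // inX f χ}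

instance (f : Fin MM → Bool) : Fintype (XS NN MM T f) := Fintype.ofFinite _

open Classical in
theorem sum_sub {α : Type} [AddCommMonoid α] (f : Fin MM → Bool) (g : XT NN MM T → α) :
    (∑ χ, if inX f χ then g χ else 0) = ∑ χ : XS NN MM T f, g χ.1 := by
  rw [← Finset.sum_filter]
  exact Finset.sum_subtype _ (by simp) g

theorem lift_MK (f : Fin MM → Bool) {P : Matrix (Fin NN) (Fin NN) ℝ}
    {Q : Matrix (Fin MM) (Fin MM) ℝ}
    (hP : ∀ i j, 0 ≤ P i j) (hQ : ∀ i j, 0 ≤ Q i j) (S : MJLSReal NN MM P Q)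
    {n q : ℕ} (τ₀ : ℤ) (σ₀ : Fin NN) (A : XT NN MM T → Matrix (Fin n) (Fin n) ℝ)
    (E : XT NN MM T → Matrix (Fin n) (Fin q) ℝ) (w : ℕ → Fin q → ℝ) (x0 : Fin n → ℝ)
    (k : ℕ) (Φ : XS NN MM T f → (Fin n → ℝ) → ENNReal) :
    @lintegral _ S.inst S.μ (fun ω => Φ ⟨rbarProc S.r S.s f τ₀ σ₀ (k + 1) ω, rbar_inX _ _ _ _ _ _ _⟩
        (traj A E (rbarProc S.r S.s f τ₀ σ₀) (fun j _ => w j) x0 (k + 1) ω))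
      = @lintegral _ S.inst S.μ (fun ω => ∑ χ' : XS NN MM T f,
        ENNReal.ofReal (pbar P Q f (rbarProc S.r S.s f τ₀ σ₀ k ω) χ'.1)
          * Φ χ' (traj A E (rbarProc S.r S.s f τ₀ σ₀) (fun j _ => w j) x0 (k + 1) ω)) := by
  classical
  let _ := S.inst
  have := S.prob
  have key := rbar_MK (T := T) S.μ hP hQ S.r S.s S.meas_r S.meas_s S.markov_r S.markov_s S.indep
    f τ₀ σ₀ A E w x0 k (fun χ v => if h : inX f χ then Φ ⟨χ, h⟩ v else 0)
  simp only [rbar_inX, dif_pos] at key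
  refine key.trans (lintegral_congr fun ω => ?_)
  have e := sum_sub f (fun χ => ENNReal.ofReal (pbar P Q f (rbarProc S.r S.s f τ₀ σ₀ k ω) χ) *
    (if h : inX f χ then Φ ⟨χ, h⟩ (traj A E (rbarProc S.r S.s f τ₀ σ₀) (fun j _ => w j) x0
      (k + 1) ω) else 0))
  refine Eq.trans ?_ (e.trans ?_)
  · refine Finset.sum_congr rfl fun χ _ => ?_
    by_cases h : inX f χ <;> simp [h]
  · refine Finset.sum_congr rfl fun χ _ => ?_
    rw [dif_pos χ.2]

end lift
end Final

open Classical in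
/-- the `H₂` LMIs (together with the distribution `ν` of `(σ₀,ρ₀)`
inducing `μ̄`) imply invertibility of the `G_{γ,δ}` and, for gains
`K_{γ,δ} = F_{γ,δ} G_{γ,δ}⁻¹`, mean square stability of `Σ_K` and `‖Σ_K‖₂² < γ₀`. -/
theorem h2_lmi_control
    {NN MM T n m q ℓ : ℕ} [NeZero NN] [NeZero MM] [NeZero T]
    [NeZero n] [NeZero m] [NeZero q] [NeZero ℓ]
    (P : Matrix (Fin NN) (Fin NN) ℝ) (Qm : Matrix (Fin MM) (Fin MM) ℝ)
    (hP0 : ∀ i j, 0 ≤ P i j) (hP1 : ∀ i, ∑ j, P i j = 1)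
    (hQ0 : ∀ i j, 0 ≤ Qm i j) (hQ1 : ∀ i, ∑ j, Qm i j = 1)
    (f : Fin MM → Bool)
    (A : Fin NN → Matrix (Fin n) (Fin n) ℝ) (B : Fin NN → Matrix (Fin n) (Fin m) ℝ)
    (C : Fin NN → Matrix (Fin ℓ) (Fin n) ℝ) (D : Fin NN → Matrix (Fin ℓ) (Fin m) ℝ)
    (E : Fin NN → Matrix (Fin n) (Fin q) ℝ)
    (γ₀ : ℝ) (hγ₀ : 0 < γ₀)
    (μr : Fin NN → ℝ) (hμr0 : ∀ i, 0 ≤ μr i) (hμr1 : ∑ i, μr i = 1)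
    (μs : Fin MM → ℝ) (hμs0 : ∀ i, 0 ≤ μs i) (hμs1 : ∑ i, μs i = 1)
    (ν : Fin NN → Fin T → ℝ) (hν0 : ∀ g d, 0 ≤ ν g d)
    (hν1 : ∑ g : Fin NN, ∑ d : Fin T, ν g d = 1)
    (μbar : XT NN MM T → ℝ)
    (hμbar : ∀ χ : XT NN MM T, μbar χ =
      if f χ.2.1 = true then μr χ.1 * μs χ.2.1
      else μr χ.1 * μs χ.2.1 * ν χ.2.2.1 χ.2.2.2)
    (W : XT NN MM T → Matrix (Fin ℓ) (Fin ℓ) ℝ)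
    (hWsym : ∀ χ, inX f χ → (W χ).IsHermitian)
    (R : XT NN MM T → Matrix (Fin n) (Fin n) ℝ)
    (hRsym : ∀ χ, inX f χ → (R χ).IsHermitian)
    (G : Fin NN → Fin T → Matrix (Fin n) (Fin n) ℝ)
    (F : Fin NN → Fin T → Matrix (Fin m) (Fin n) ℝ)
    (hLMI1 : ∀ χ : XT NN MM T, inX f χ →
      (Matrix.fromBlocks (R χ - μbar χ • (E χ.1 * (E χ.1)ᵀ))
        (A χ.1 * G χ.2.2.1 χ.2.2.2 + B χ.1 * F χ.2.2.1 χ.2.2.2)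
        (A χ.1 * G χ.2.2.1 χ.2.2.2 + B χ.1 * F χ.2.2.1 χ.2.2.2)ᵀ
        (G χ.2.2.1 χ.2.2.2 + (G χ.2.2.1 χ.2.2.2)ᵀ - Dop P Qm f R χ)).PosDef)
    (hLMI2 : ∀ χ : XT NN MM T, inX f χ →
      (Matrix.fromBlocks (W χ)
        (C χ.1 * G χ.2.2.1 χ.2.2.2 + D χ.1 * F χ.2.2.1 χ.2.2.2)
        (C χ.1 * G χ.2.2.1 χ.2.2.2 + D χ.1 * F χ.2.2.1 χ.2.2.2)ᵀ
        (G χ.2.2.1 χ.2.2.2 + (G χ.2.2.1 χ.2.2.2)ᵀ - Dop P Qm f R χ)).PosDef)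
    (htr : (∑ χ : XT NN MM T, if inX f χ then (W χ).trace else 0) < γ₀) :
    (∀ g d, Admissible f g d → IsUnit (G g d)) ∧
    ∀ K : Fin NN → Fin T → Matrix (Fin m) (Fin n) ℝ,
      (∀ g d, Admissible f g d → K g d = F g d * (G g d)⁻¹) →
      MeanSquareStable P Qm f A B E K
        ∧ H2SqLtSigma P Qm f A B C D E K μbar γ₀ := by
  have hμ0 : ∀ χ, 0 ≤ μbar χ := by
    intro χ
    rw [hμbar]
    split_ifs
    · exact mul_nonneg (hμr0 _) (hμs0 _)
    · exact mul_nonneg (mul_nonneg (hμr0 _) (hμs0 _)) (hν0 _ _)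
  set p : XS NN MM T f → XS NN MM T f → ℝ := fun a b => pbar P Qm f a.1 b.1 with hpdef
  have hp : ∀ a b, 0 ≤ p a b := by
    intro a b
    simp only [hpdef, pbar]
    refine mul_nonneg (mul_nonneg ?_ (hP0 _ _)) (hQ0 _ _)
    split_ifs <;> norm_num
  set RS : XS NN MM T f → Matrix (Fin n) (Fin n) ℝ := fun χ => R χ.1 with hRS
  have hRpd : ∀ χ, (RS χ).PosDef := by
    intro χ
    have h1 := block_inl (hLMI1 χ.1 χ.2)
    have h2 := psd_conj (PosSemidef.one (n := Fin q) (R := ℝ)) (E χ.1.1)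
    rw [Matrix.mul_one] at h2
    have h3 := h1.add_posSemidef (h2.smul (hμ0 χ.1))
    rwa [sub_add_cancel] at h3
  have hD : ∀ χ : XS NN MM T f, Dop P Qm f R χ.1 = dsumL p RS χ := by
    intro χ
    exact sum_sub f (fun χ' => pbar P Qm f χ' χ.1 • R χ')
  have hG : ∀ χ : XS NN MM T f, IsUnit (G χ.1.2.2.1 χ.1.2.2.2) := by
    intro χ
    have h1 := block_inr (hLMI1 χ.1 χ.2)
    rw [hD χ] at h1
    have h2 := h1.add_posSemidef (psd_dsum hp (fun χ => (hRpd χ).posSemidef) χ)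
    rw [sub_add_cancel] at h2
    exact unit_of_pd h2
  have hAdm : ∀ χ : XS NN MM T f, Admissible f χ.1.2.2.1 χ.1.2.2.2 :=
    fun χ => ⟨χ.1.1, χ.1.2.1, χ.2⟩
  refine ⟨fun g d ⟨α, β, h⟩ => hG ⟨_, h⟩, fun K hK => ?_⟩
  have hKG : ∀ χ : XS NN MM T f,
      K χ.1.2.2.1 χ.1.2.2.2 * G χ.1.2.2.1 χ.1.2.2.2 = F χ.1.2.2.1 χ.1.2.2.2 := by
    intro χ
    rw [hK _ _ (hAdm χ), Matrix.mul_assoc,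
      Matrix.nonsing_inv_mul _ ((Matrix.isUnit_iff_isUnit_det _).1 (hG χ)), Matrix.mul_one]
  set AS : XS NN MM T f → Matrix (Fin n) (Fin n) ℝ := fun χ => AKmat A B K χ.1 with hAS
  set CS : XS NN MM T f → Matrix (Fin ℓ) (Fin n) ℝ := fun χ => CKmat C D K χ.1 with hCS
  have hT : ∀ χ, (RS χ - μbar χ.1 • (E χ.1.1 * (E χ.1.1)ᵀ) - TL p AS RS χ).PosDef := by
    intro χ
    have h1 := hLMI1 χ.1 χ.2
    have e : A χ.1.1 * G χ.1.2.2.1 χ.1.2.2.2 + B χ.1.1 * F χ.1.2.2.1 χ.1.2.2.2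
        = AS χ * G χ.1.2.2.1 χ.1.2.2.2 := by
      simp only [hAS, AKmat]
      rw [Matrix.add_mul, Matrix.mul_assoc, hKG]
    rw [e, hD] at h1
    exact lmi_pd h1
  have hW : ∀ χ : XS NN MM T f, (W χ.1 - CS χ * dsumL p RS χ * (CS χ)ᵀ).PosDef := by
    intro χ
    have h1 := hLMI2 χ.1 χ.2
    have e : C χ.1.1 * G χ.1.2.2.1 χ.1.2.2.2 + D χ.1.1 * F χ.1.2.2.1 χ.1.2.2.2
        = CS χ * G χ.1.2.2.1 χ.1.2.2.2 := by
      simp only [hCS, CKmat]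
      rw [Matrix.add_mul, Matrix.mul_assoc, hKG]
    rw [e, hD] at h1
    exact lmi_pd h1
  constructor
  · have hT' : ∀ χ, (RS χ - TL p AS RS χ).PosDef := by
      intro χ
      have h2 := psd_conj (PosSemidef.one (n := Fin q) (R := ℝ)) (E χ.1.1)
      rw [Matrix.mul_one] at h2
      have h3 := (hT χ).add_posSemidef (h2.smul (hμ0 χ.1))
      have e : RS χ - μbar χ.1 • (E χ.1.1 * (E χ.1.1)ᵀ) - TL p AS RS χ
          + μbar χ.1 • (E χ.1.1 * (E χ.1.1)ᵀ) = RS χ - TL p AS RS χ := by abel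
      rwa [e] at h3
    obtain ⟨c, lam, hc, hl0, hl1, hb⟩ := core_mss hp AS RS hRpd hT'
    refine ⟨c, by linarith, lam, hl0, hl1, ?_⟩
    intro S τ₀ _ σ₀ r₀ s₀ hinit x0 k
    let _ := S.inst
    have := S.prob
    cases k with
    | zero =>
      simp only [traj, sqE, lintegral_const, measure_univ, mul_one, pow_zero]
      refine ENNReal.ofReal_le_ofReal ?_
      exact le_mul_of_one_le_left (Finset.sum_nonneg fun i _ => sq_nonneg _) hc
    | succ k =>
      set θ : ℕ → S.Ω → XS NN MM T f := fun k ω =>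
        ⟨rbarProc S.r S.s f τ₀ σ₀ k ω, rbar_inX _ _ _ _ _ _ _⟩ with hθ
      set x : ℕ → S.Ω → Fin n → ℝ := traj (AKmat A B K) (fun χ => E χ.1)
              (rbarProc S.r S.s f τ₀ σ₀) (fun _ _ => 0) x0 with hx
      have hc0 : ∃ χ0 : XS NN MM T f, ∀ᵐ ω ∂S.μ, θ 0 ω = χ0 := by
        refine ⟨⟨if f s₀ = true then (r₀, s₀, r₀, 0) else (r₀, s₀, σ₀, intToFin T (-τ₀)), ?_⟩, ?_⟩
        · split_ifs with h <;> simp [inX, h]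
        · filter_upwards [hinit] with ω hω
          apply Subtype.ext
          simp only [hθ]
          rw [rbar_zero, hω.1, hω.2]
      obtain ⟨χ0, hχ0⟩ := hc0
      have hm := moment S.μ hp AS θ x
        (fun k Φ => lift_MK f hP0 hQ0 S τ₀ σ₀ (AKmat A B K) (fun χ => E χ.1) (fun _ => 0) x0 k Φ)
        (fun k ω => by simp [hx, traj, hAS, hθ]) χ0 (AS χ0 *ᵥ x0)
        (by
          filter_upwards [hχ0] with ω hω
          refine ⟨hω, ?_⟩
          rw [← hω]
          simp [hx, traj, hAS, hθ]) k (fun _ => 1) (fun _ => PosSemidef.one)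
      simp only [sqE_eq]
      rw [hm]
      exact ENNReal.ofReal_le_ofReal (hb χ0 x0 k)
  · intro S τ σv hS
    have hterm : ∀ (i : Fin q) (χ : XS NN MM T f) (S : MJLSReal NN MM P Qm) (τ₀ : ℤ)
        (σ₀ : Fin NN),
        (∀ᵐ ω ∂S.μ, rbarProc S.r S.s f τ₀ σ₀ 0 ω = χ.1) →
        H2TermSigma S f τ₀ σ₀ A B C D E K i
          = ∑' k : ℕ, ENNReal.ofReal (costL p CS ((TL p AS ^ k) (Pi.single χ
            (vecMulVec (E χ.1.1 *ᵥ Pi.single i 1) (E χ.1.1 *ᵥ Pi.single i 1))))) := by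
      intro i χ S τ₀ σ₀ hini
      let _ := S.inst
      have := S.prob
      set θ : ℕ → S.Ω → XS NN MM T f := fun k ω =>
        ⟨rbarProc S.r S.s f τ₀ σ₀ k ω, rbar_inX _ _ _ _ _ _ _⟩ with hθ
      set x : ℕ → S.Ω → Fin n → ℝ := traj (AKmat A B K) (fun χ => E χ.1)
              (rbarProc S.r S.s f τ₀ σ₀) (impulse q i) 0 with hx
      have hm := moment_out S.μ hp AS CS θ x
        (fun k Φ => lift_MK f hP0 hQ0 S τ₀ σ₀ (AKmat A B K) (fun χ => E χ.1)
          (fun k j => if k = 0 ∧ j = i then 1 else 0) 0 k Φ)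
        (fun k ω => by
          have h0 : (impulse q i (k + 1) ω) = 0 := by
            funext j; simp [impulse]
          simp only [hx]
          rw [traj, h0, Matrix.mulVec_zero, add_zero]) χ (E χ.1.1 *ᵥ Pi.single i 1)
        (by
          filter_upwards [hini] with ω hω
          refine ⟨Subtype.ext hω, ?_⟩
          have h0 : (impulse q i 0 ω) = Pi.single i 1 := by
            funext j; simp [impulse, Pi.single_apply]
          simp only [hx, traj]
          rw [hω, h0, Matrix.mulVec_zero, zero_add])
      rw [H2TermSigma, tsum_eq_zero_add' ENNReal.summable]
      have z : ∫⁻ ω, sqE ((CKmat C D K (rbarProc S.r S.s f τ₀ σ₀ 0 ω)).mulVec (x 0 ω)) ∂S.μ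
          = 0 := by
        simp [hx, traj, sqE]
      rw [z, zero_add]
      exact tsum_congr hm
    have e : ∀ i : Fin q, (∑ χ : XT NN MM T,
        if inX f χ
        then ENNReal.ofReal (μbar χ) * H2TermSigma (S i χ) f (τ i χ) (σv i χ) A B C D E K i
        else 0) = ∑ χ : XS NN MM T f, ENNReal.ofReal (μbar χ.1) * ∑' k : ℕ,
          ENNReal.ofReal (costL p CS ((TL p AS ^ k) (Pi.single χ
            (vecMulVec (E χ.1.1 *ᵥ Pi.single i 1) (E χ.1.1 *ᵥ Pi.single i 1))))) := by
      intro i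
      rw [sum_sub f (fun χ => ENNReal.ofReal (μbar χ) *
        H2TermSigma (S i χ) f (τ i χ) (σv i χ) A B C D E K i)]
      exact Finset.sum_congr rfl fun χ _ => by rw [hterm i χ _ _ _ (hS i χ.1 χ.2).2]
    simp only [e]
    refine core_h2 hp AS RS CS (fun χ => W χ.1) (fun χ => E χ.1.1) (fun χ => μbar χ.1)
      (fun χ => hμ0 _) hRpd hT hW γ₀ hγ₀ ?_
    rwa [← sum_sub f (fun χ => (W χ).trace)]

end
end
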